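/- Let d ≥ 3 and θ ∈ (0,1), and let θ₀ = (d²+d−2)/(d²+d). There exists a constant C_θ < ∞, depending only on d and θ, with the following property. Let E, F ⊆ ℝ^d be measurable sets of finite positive measure for which there exist A > 0 and a measurable T ⊆ ℝ such that A/2 ≤ |{y ∈ ℝ^{d-1} : (t,y) ∈ F}| ≤ 2A for a.e. t ∈ T and |{y : (t,y) ∈ F}| = 0 for a.e. t ∉ T. If ε ∈ (0,1] and 𝒳(E,F) ≥ ε·|E|^{1/p_θ}·‖1_F‖_{L^{q_θ′}_t L^{r_θ′}_y}, then |E|^{1/p_{θ₀}}·|F|^{1/q_{θ₀}′} ≤ C_θ·ε^{−C_θ}·|E|^{1/p_θ}·‖1_F‖_{L^{q_θ′}_t L^{r_θ′}_y}. -/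

import Mathlib

open MeasureTheory ENNReal Set Filter
noncomputable section

/-- Points of `ℝ^d` written as `(s, x)` with `s ∈ ℝ`, `x ∈ ℝ^(d-1)` (here `n = d-1`). -/
abbrev Pt (n : ℕ) := ℝ × (Fin n → ℝ)

/-- The moment curve `γ(t) = (t, t², …, t^n)` in `ℝ^n`. -/
def mom (n : ℕ) (t : ℝ) : Fin n → ℝ := fun i => t ^ (i.1 + 1)

/-- The restricted X-ray transform `Xf(t,y) = ∫ f(s, y + s·γ(t)) ds` of a
nonnegative function `f` on `ℝ^d`. -/
def Xray (n : ℕ) (f : Pt n → ℝ) (z : Pt n) : ℝ≥0∞ :=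
  ∫⁻ s : ℝ, ENNReal.ofReal (f (s, z.2 + s • mom n z.1))

/-- Mixed norm `‖g‖_{L^q_t L^r_y}` for an `ℝ≥0∞`-valued function on `ℝ × Y`. -/
def mixedNormG {Y : Type*} [MeasurableSpace Y] (ν : Measure Y) (q r : ℝ)
    (g : ℝ × Y → ℝ≥0∞) : ℝ≥0∞ :=
  (∫⁻ t : ℝ, (∫⁻ y, g (t, y) ^ r ∂ν) ^ (q / r)) ^ (1 / q)

/-- Mixed norm `‖g‖_{L^q_t L^r_y}` on `ℝ^d = ℝ × ℝ^(d-1)`, `ℝ≥0∞`-valued functions. -/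
def mixedNorm (n : ℕ) (q r : ℝ) (g : Pt n → ℝ≥0∞) : ℝ≥0∞ :=
  mixedNormG volume q r g

/-- Mixed norm of a real-valued function. -/
def mixedNormR (n : ℕ) (q r : ℝ) (g : Pt n → ℝ) : ℝ≥0∞ :=
  mixedNorm n q r fun z => ENNReal.ofReal |g z|

/-- The `L^p` norm of a real-valued function on `ℝ^d`. -/
def LpN (n : ℕ) (p : ℝ) (f : Pt n → ℝ) : ℝ≥0∞ :=
  (∫⁻ z : Pt n, ENNReal.ofReal |f z| ^ p) ^ (1 / p)

/-- The `L^p` norm restricted to a set. -/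
def LpNOn (n : ℕ) (p : ℝ) (f : Pt n → ℝ) (S : Set (Pt n)) : ℝ≥0∞ :=
  (∫⁻ z in S, ENNReal.ofReal |f z| ^ p) ^ (1 / p)

/-- `p_θ`, defined by `1/p_θ = 1 - θ + θd/(d+2)`. -/
def pExp (d : ℕ) (θ : ℝ) : ℝ := (1 - θ + θ * d / (d + 2))⁻¹

/-- `q_θ`, defined by `1/q_θ = θd/(d+2)`. -/
def qExp (d : ℕ) (θ : ℝ) : ℝ := (θ * d / (d + 2))⁻¹

/-- `r_θ`, defined by `1/r_θ = 1 - θ + θ(d²-d-2)/(d²+d-2)`. -/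
def rExp (d : ℕ) (θ : ℝ) : ℝ :=
  (1 - θ + θ * ((d:ℝ)^2 - d - 2) / ((d:ℝ)^2 + d - 2))⁻¹

/-- Dual exponent `p' = p/(p-1)`. -/
def dualExp (p : ℝ) : ℝ := p / (p - 1)

/-- `θ₀ = (d²+d-2)/(d²+d)`, the exponent where `q_θ = r_θ`. -/
def theta0 (d : ℕ) : ℝ := ((d:ℝ)^2 + d - 2) / ((d:ℝ)^2 + d)

/-- The mixed norm `‖Xf‖_{L^{q_θ}_t L^{r_θ}_y}`. -/
def XNorm (d : ℕ) (θ : ℝ) (f : Pt (d-1) → ℝ) : ℝ≥0∞ :=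
  mixedNorm (d-1) (qExp d θ) (rExp d θ) (Xray (d-1) f)

/-- The source norm `‖f‖_{L^{p_θ}}`. -/
def srcNorm (d : ℕ) (θ : ℝ) (f : Pt (d-1) → ℝ) : ℝ≥0∞ := LpN (d-1) (pExp d θ) f

/-- The dual mixed norm `‖g‖_{L^{q_θ'}_t L^{r_θ'}_y}`. -/
def dualNorm (d : ℕ) (θ : ℝ) (g : Pt (d-1) → ℝ) : ℝ≥0∞ :=
  mixedNormR (d-1) (dualExp (qExp d θ)) (dualExp (rExp d θ)) g

/-- The operator norm `A_θ` of `X : L^{p_θ} → L^{q_θ}_t L^{r_θ}_y` (restricted to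
nonnegative functions). -/
def Aconst (d : ℕ) (θ : ℝ) : ℝ≥0∞ :=
  sSup { M | ∃ f : Pt (d-1) → ℝ, Measurable f ∧ 0 ≤ f ∧
    srcNorm d θ f = 1 ∧ M = XNorm d θ f }

/-- The bilinear pairing `𝒳(f,g) = ∫ Xf · g`. -/
def pairing (n : ℕ) (f g : Pt n → ℝ) : ℝ≥0∞ :=
  ∫⁻ z : Pt n, Xray n f z * ENNReal.ofReal (g z)

/-- Indicator function of a set, as a real-valued function. -/
def ind (n : ℕ) (E : Set (Pt n)) : Pt n → ℝ := E.indicator fun _ => (1:ℝ)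

/-- `𝒳(E,F) = ∫ X1_E · 1_F`. -/
def pairSet (n : ℕ) (E F : Set (Pt n)) : ℝ≥0∞ := pairing n (ind n E) (ind n F)

/-- Dyadic level set `E_j = {z : 2^j ≤ f(z) < 2^(j+1)}`. -/
def lev (n : ℕ) (f : Pt n → ℝ) (j : ℤ) : Set (Pt n) :=
  {z | (2:ℝ) ^ j ≤ f z ∧ f z < (2:ℝ) ^ (j + 1)}

/-- The measure of the slice `{y : (t,y) ∈ F}`. -/
def sliceVol (n : ℕ) (F : Set (Pt n)) (t : ℝ) : ℝ≥0∞ :=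
  volume {y : Fin n → ℝ | (t, y) ∈ F}

/-- `F_k^l = F_k ∩ π⁻¹{t : 2^l ≤ |{y : (t,y) ∈ F_k}| < 2^(l+1)}` where `F_k` is
the `k`-th level set of `g`. -/
def Fkl (n : ℕ) (g : Pt n → ℝ) (k l : ℤ) : Set (Pt n) :=
  lev n g k ∩ {z | (2:ℝ≥0∞) ^ l ≤ sliceVol n (lev n g k) z.1 ∧
    sliceVol n (lev n g k) z.1 < (2:ℝ≥0∞) ^ (l + 1)}

/-- `F_{kl}^m`: the `k`-th level set of `g`, restricted to `t` with
`2^l ≤ ∫ g(t,y)^{r'} dy < 2^(l+1)` and `2^m ≤ |{y : (t,y) ∈ F_k}| < 2^(m+1)`. -/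
def Fklm (n : ℕ) (r' : ℝ) (g : Pt n → ℝ) (k l m : ℤ) : Set (Pt n) :=
  lev n g k ∩
  {z | (2:ℝ≥0∞) ^ l ≤ (∫⁻ y, ENNReal.ofReal (g (z.1, y)) ^ r') ∧
    (∫⁻ y, ENNReal.ofReal (g (z.1, y)) ^ r') < (2:ℝ≥0∞) ^ (l + 1)} ∩
  {z | (2:ℝ≥0∞) ^ m ≤ sliceVol n (lev n g k) z.1 ∧
    sliceVol n (lev n g k) z.1 < (2:ℝ≥0∞) ^ (m + 1)}

/-- The lower-triangular matrix `G_{t₀}` with entries `C(m,i)·t₀^(m-i)`, acting on `ℝ^(d-1)`. -/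
def Gmat (n : ℕ) (t₀ : ℝ) (x : Fin n → ℝ) : Fin n → ℝ := fun m =>
  ∑ i ∈ Finset.univ.filter (fun i : Fin n => i ≤ m),
    ((Nat.choose (m.1+1) (i.1+1)) : ℝ) * t₀ ^ (m.1 - i.1) * x i

/-- The symmetry group `G_d` of the restricted X-ray transform, with the (constant)
Jacobian determinant carried along: `IsSymJ n φ J` means `φ ∈ G_d` with Jacobian `J`. -/
inductive IsSymJ (n : ℕ) : (Pt n → Pt n) → ℝ → Prop
  | translation (v : Fin n → ℝ) : IsSymJ n (fun p => (p.1, p.2 + v)) 1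
  | scaling (α β : ℝ) (hα : 0 < α) (hβ : 0 < β) :
      IsSymJ n (fun p => (α * p.1, fun i => α * β ^ (i.1 + 1) * p.2 i))
        (α ^ (n+1) * β ^ (n * (n+1) / 2))
  | shift (s₀ t₀ : ℝ) :
      IsSymJ n (fun p => (p.1 + s₀, Gmat n t₀ p.2 + (p.1 + s₀) • mom n t₀)) 1
  | comp (φ ψ : Pt n → Pt n) (J₁ J₂ : ℝ) :
      IsSymJ n φ J₁ → IsSymJ n ψ J₂ → IsSymJ n (φ ∘ ψ) (J₁ * J₂)

/-- The `L^p`-normalized action `φ*f = J^(1/p) · (f ∘ φ)` of a symmetry on functions. -/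
def symAct (n : ℕ) (p : ℝ) (J : ℝ) (φ : Pt n → Pt n) (f : Pt n → ℝ) : Pt n → ℝ :=
  fun z => J ^ (1/p) * f (φ z)

/-- Lorentz norm `‖h‖_{L^{p,s}}` (up to equivalence), via dyadic level sets. -/
def lorentzNorm {α : Type*} [MeasurableSpace α] (μ : Measure α) (p s : ℝ)
    (h : α → ℝ≥0∞) : ℝ≥0∞ :=
  (∑' j : ℤ, ((2:ℝ≥0∞) ^ j *
      μ {z | (2:ℝ≥0∞) ^ j ≤ h z ∧ h z < (2:ℝ≥0∞) ^ (j+1)} ^ (1/p)) ^ s) ^ (1/s)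

/-- Weak `L^{p,∞}` norm. -/
def weakNorm {α : Type*} [MeasurableSpace α] (μ : Measure α) (p : ℝ)
    (h : α → ℝ≥0∞) : ℝ≥0∞ :=
  ⨆ l : ℝ≥0∞, l * μ {z | l < h z} ^ (1/p)

/-- Mixed Lorentz norm `‖g‖_{L^{q,s}_t L^r_y}` (up to equivalence). -/
def mixedLorentzG {Y : Type*} [MeasurableSpace Y] (ν : Measure Y) (q s r : ℝ)
    (g : ℝ × Y → ℝ≥0∞) : ℝ≥0∞ :=
  (∑' l : ℤ, (mixedNormG ν q r
      (Set.indicator {z : ℝ × Y | (2:ℝ≥0∞) ^ l ≤ (∫⁻ y, g (z.1, y) ^ r ∂ν) ∧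
        (∫⁻ y, g (z.1, y) ^ r ∂ν) < (2:ℝ≥0∞) ^ (l+1)} g)) ^ s) ^ (1/s)

/-- Weak mixed norm `‖g‖_{L^{q,∞}_t L^r_y}`. -/
def weakMixedG {Y : Type*} [MeasurableSpace Y] (ν : Measure Y) (q r : ℝ)
    (g : ℝ × Y → ℝ≥0∞) : ℝ≥0∞ :=
  ⨆ l : ℝ≥0∞, l * (volume {t : ℝ | l < (∫⁻ y, g (t, y) ^ r ∂ν) ^ (1/r)}) ^ (1/q)

/-- The paraball `B(s₀,t₀,ȳ,α,β)`. -/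
def paraball (n : ℕ) (s₀ t₀ : ℝ) (ybar : Fin n → ℝ) (α β : ℝ) : Set (Pt n) :=
  {z | |z.1 - s₀| < α ∧ ∀ m : Fin n,
    |(∑ i ∈ Finset.univ.filter (fun i : Fin n => i ≤ m),
        ((Nat.choose (m.1+1) (i.1+1)) : ℝ) * (-t₀) ^ (m.1 - i.1) *
          (z.2 i - (ybar + s₀ • mom n t₀) i))
      + (-t₀) ^ (m.1+1) * (z.1 + s₀)| ≤ β ^ (m.1+1) * α}

/-- The dual paraball `B*(s₀,t₀,ȳ,α,β)`. -/
def dualParaball (n : ℕ) (s₀ t₀ : ℝ) (ybar : Fin n → ℝ) (α β : ℝ) : Set (Pt n) :=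
  {z | |z.1 - t₀| < β ∧ ∀ m : Fin n,
    |(∑ i ∈ Finset.univ.filter (fun i : Fin n => i ≤ m),
        ((Nat.choose (m.1+1) (i.1+1)) : ℝ) * (-t₀) ^ (m.1 - i.1) * (z.2 i - ybar i))
      + s₀ * (z.1 ^ (m.1+1) + (-t₀) ^ (m.1+1))| ≤ β ^ (m.1+1) * α}

/-- The mock-distance between two paraballs. -/
def mockDist (n : ℕ) (sa ta : ℝ) (ya : Fin n → ℝ) (aa ba : ℝ)
    (sb tb : ℝ) (yb : Fin n → ℝ) (ab bb : ℝ) : ℝ :=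
  (max (aa ^ n * ba ^ (n * (n+1) / 2)) (ab ^ n * bb ^ (n * (n+1) / 2)) /
    min (aa ^ n * ba ^ (n * (n+1) / 2)) (ab ^ n * bb ^ (n * (n+1) / 2)))
  + (aa / ab + ab / aa) + (ba / bb + bb / ba)
  + |sa - sb| * (1/aa + 1/ab) + |ta - tb| * (1/ba + 1/bb)
  + ∑ m : Fin n,
      |(∑ i ∈ Finset.univ.filter (fun i : Fin n => i ≤ m),
          ((Nat.choose (m.1+1) (i.1+1)) : ℝ) * (-ta) ^ (m.1 - i.1) *
            ((yb + sb • mom n tb) i - (ya + sa • mom n ta) i))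
        + (-ta) ^ (m.1+1) * (sb + sa)| / (aa * ba ^ (m.1+1))
  + ∑ m : Fin n,
      |(∑ i ∈ Finset.univ.filter (fun i : Fin n => i ≤ m),
          ((Nat.choose (m.1+1) (i.1+1)) : ℝ) * (-tb) ^ (m.1 - i.1) *
            ((ya + sa • mom n ta) i - (yb + sb • mom n tb) i))
        + (-tb) ^ (m.1+1) * (sa + sb)| / (ab * bb ^ (m.1+1))
  + ∑ m : Fin n,
      |(∑ i ∈ Finset.univ.filter (fun i : Fin n => i ≤ m),
          ((Nat.choose (m.1+1) (i.1+1)) : ℝ) * (-sa) ^ (m.1 - i.1) * (yb i - ya i))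
        + sa * (tb ^ (m.1+1) + (-ta) ^ (m.1+1))| / (aa * ba ^ (m.1+1))
  + ∑ m : Fin n,
      |(∑ i ∈ Finset.univ.filter (fun i : Fin n => i ≤ m),
          ((Nat.choose (m.1+1) (i.1+1)) : ℝ) * (-sb) ^ (m.1 - i.1) * (ya i - yb i))
        + sb * (ta ^ (m.1+1) + (-tb) ^ (m.1+1))| / (ab * bb ^ (m.1+1))


/-! ### Kernels -/

/-- Truncated power kernel. -/
def kp (b p : ℝ) (τ : ℝ) : ℝ≥0∞ := if b ≤ |τ| then ENNReal.ofReal (|τ| ^ (-p)) else 0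

/-- Truncated reciprocal kernel. -/
def ker1 (b : ℝ) (τ : ℝ) : ℝ≥0∞ := if b ≤ |τ| then ENNReal.ofReal (|τ|⁻¹) else 0

/-- Indicator of the set of well separated differences. -/
def far (b : ℝ) (τ : ℝ) : ℝ≥0∞ := if b ≤ |τ| then 1 else 0

lemma meas_far (b : ℝ) : Measurable (far b) := by
  unfold far
  exact Measurable.ite (measurableSet_le measurable_const (by fun_prop)) (by fun_prop) (by fun_prop)

lemma meas_ker1 (b : ℝ) : Measurable (ker1 b) := by
  unfold ker1
  exact Measurable.ite (measurableSet_le measurable_const (by fun_prop)) (by fun_prop) (by fun_prop)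

lemma meas_kp (b p : ℝ) : Measurable (kp b p) := by
  unfold kp
  exact Measurable.ite (measurableSet_le measurable_const (by fun_prop)) (by fun_prop) (by fun_prop)

lemma lint_kp (b p : ℝ) (hb : 0 < b) (hp : 1 < p) :
    ∫⁻ τ, kp b p τ ≤ ENNReal.ofReal (2 / (p - 1) * b ^ (1 - p)) := by
  have hI : ∫⁻ τ in Ioi b, ENNReal.ofReal (τ ^ (-p)) = ENNReal.ofReal (1 / (p - 1) * b ^ (1 - p)) := by
    rw [← ofReal_integral_eq_lintegral_ofReal]
    · rw [integral_Ioi_rpow_of_lt (by linarith) hb]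
      congr 1
      rw [show -p + 1 = 1 - p by ring]
      rw [show p - 1 = -(1-p) by ring]
      have : 1 - p ≠ 0 := by linarith
      field_simp
    · exact integrableOn_Ioi_rpow_of_lt (by linarith) hb
    · filter_upwards [self_mem_ae_restrict measurableSet_Ioi] with x hx
      exact Real.rpow_nonneg (le_of_lt (hb.trans hx)) _
  have hI2 : ∫⁻ τ, (Ici b).indicator (fun τ => ENNReal.ofReal (τ ^ (-p))) τ =
      ENNReal.ofReal (1 / (p - 1) * b ^ (1 - p)) := by
    rw [lintegral_indicator measurableSet_Ici, ← hI]
    exact (setLIntegral_congr Ioi_ae_eq_Ici).symm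
  have hle : ∀ τ, kp b p τ ≤ (Ici b).indicator (fun τ => ENNReal.ofReal (τ ^ (-p))) τ +
      (Ici b).indicator (fun τ => ENNReal.ofReal (τ ^ (-p))) (-τ) := by
    intro τ
    unfold kp
    split_ifs with h
    · rcases le_or_gt 0 τ with h0 | h0
      · rw [abs_of_nonneg h0] at h ⊢
        rw [indicator_of_mem (show τ ∈ Ici b from h)]
        exact le_self_add
      · rw [abs_of_neg h0] at h ⊢
        rw [indicator_of_mem (show -τ ∈ Ici b from h)]
        exact le_add_self
    · exact zero_le
  have hm : Measurable ((Ici b).indicator (fun τ : ℝ => ENNReal.ofReal (τ ^ (-p)))) :=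
    Measurable.indicator (by fun_prop) measurableSet_Ici
  calc ∫⁻ τ, kp b p τ ≤ _ := lintegral_mono hle
    _ = _ := lintegral_add_left hm _
    _ = ENNReal.ofReal (1 / (p - 1) * b ^ (1 - p)) + ENNReal.ofReal (1 / (p - 1) * b ^ (1 - p)) := by
        rw [lintegral_neg_eq_self (f := (Ici b).indicator (fun τ => ENNReal.ofReal (τ ^ (-p)))), hI2]
    _ = _ := by
        have : 0 ≤ 1 / (p - 1) * b ^ (1 - p) := by
          have : 0 < p - 1 := by linarith
          positivity
        rw [← ENNReal.ofReal_add this this]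
        congr 1; ring

lemma lint_kp_sub (b p h : ℝ) (hb : 0 < b) (hp : 1 < p) :
    ∫⁻ τ, kp b p (τ - h) ≤ ENNReal.ofReal (2 / (p - 1) * b ^ (1 - p)) := by
  rw [lintegral_sub_right_eq_self (fun τ => kp b p τ) h]
  exact lint_kp b p hb hp

lemma ker1_pow (b τ : ℝ) (m : ℕ) (hm : 0 < m) : ker1 b τ ^ m = kp b m τ := by
  unfold ker1 kp
  split_ifs with h
  · rw [← ENNReal.ofReal_pow (by positivity)]
    congr 1
    rw [Real.rpow_neg (by positivity), Real.rpow_natCast, inv_pow]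
  · simp [hm.ne']

lemma list_prod_le (l : List ℝ≥0∞) (hl : l ≠ []) : l.prod ≤ (l.map (fun x => x ^ l.length)).sum := by
  obtain ⟨M, hM, hmax⟩ : ∃ M ∈ l, ∀ x ∈ l, x ≤ M := by
    have := l.toFinset.exists_max_image id (by simpa [List.toFinset_nonempty_iff] using hl)
    simpa using this
  calc l.prod ≤ M ^ l.length := List.prod_le_pow_card l M hmax
    _ ≤ _ := List.le_sum_of_mem (List.mem_map_of_mem (f := fun x => x ^ l.length) hM)

lemma lint_prod_ker (b : ℝ) (hb : 0 < b) (H : List ℝ) (hH : 2 ≤ H.length) :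
    ∫⁻ τ, (H.map (fun h => ker1 b (τ - h))).prod ≤
      ENNReal.ofReal (2 * H.length * (b⁻¹) ^ (H.length - 1)) := by
  set m := H.length with hm
  have h1 : ∀ τ, (H.map (fun h => ker1 b (τ - h))).prod ≤
      (H.map (fun h => kp b m (τ - h))).sum := by
    intro τ
    refine (list_prod_le _ (by rintro h; simp at h; simp [h] at hm; omega)).trans_eq ?_
    rw [List.map_map]
    congr 1
    apply List.map_congr_left
    intro h _
    simp only [Function.comp, List.length_map]
    rw [← hm, ker1_pow b _ m (by omega)]
  have h2 : ∀ L : List ℝ, ∫⁻ τ, (L.map (fun h => kp b m (τ - h))).sum ≤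
      L.length * ENNReal.ofReal (2 * (b⁻¹) ^ (m - 1)) := by
    intro L
    induction L with
    | nil => simp
    | cons a L ih =>
      simp only [List.map_cons, List.sum_cons, List.length_cons]
      rw [lintegral_add_left (show Measurable (fun τ => kp b m (τ - a)) from
        (meas_kp b m).comp (measurable_id.sub_const a))]
      push_cast
      rw [add_mul, add_comm, one_mul]
      refine add_le_add ih ((lint_kp_sub b m a hb (by exact_mod_cast hH)).trans ?_)
      apply ENNReal.ofReal_le_ofReal
      have hm1 : (2:ℝ) ≤ m := by exact_mod_cast hH
      have e : b ^ (1 - (m:ℝ)) = (b⁻¹) ^ (m - 1) := by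
        rw [show 1 - (m:ℝ) = -((m - 1 : ℕ) : ℝ) by push_cast [Nat.cast_sub (show 1 ≤ m by omega)]; ring]
        rw [Real.rpow_neg hb.le, Real.rpow_natCast, inv_pow]
      rw [e]
      gcongr
      rw [div_le_iff₀ (by linarith)]
      linarith
  refine (lintegral_mono h1).trans ((h2 H).trans_eq ?_)
  rw [← hm, ← ENNReal.ofReal_natCast, ← ENNReal.ofReal_mul (by positivity)]
  congr 1; ring

lemma ker_pair (b : ℝ) (hb : 0 < b) (t0 t1 t2 : ℝ) :
    ker1 b (t1 - t0) * (ker1 b (t2 - t1) * ker1 b (t2 - t0)) ≤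
      2 * kp b (3/2) (t1 - t0) * (kp b (3/2) (t2 - t1) + kp b (3/2) (t2 - t0)) := by
  unfold ker1 kp
  by_cases h1 : b ≤ |t1 - t0|
  swap
  · simp [h1]
  by_cases h2 : b ≤ |t2 - t1|
  swap
  · simp [h2]
  by_cases h3 : b ≤ |t2 - t0|
  swap
  · simp [h3]
  simp only [h1, h2, h3, if_true]
  rw [show (2:ℝ≥0∞) = ENNReal.ofReal 2 by simp]
  rw [← ENNReal.ofReal_mul (by positivity), ← ENNReal.ofReal_mul (by positivity),
    ← ENNReal.ofReal_mul (by positivity), ← ENNReal.ofReal_add (by positivity) (by positivity),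
    ← ENNReal.ofReal_mul (by positivity)]
  apply ENNReal.ofReal_le_ofReal
  have hx : 0 < |t1 - t0| := hb.trans_le h1
  have hy : 0 < |t2 - t1| := hb.trans_le h2
  have hz : 0 < |t2 - t0| := hb.trans_le h3
  have htri : |t1 - t0| ≤ |t2 - t1| + |t2 - t0| := by
    have := abs_sub_le t1 t2 t0
    rwa [abs_sub_comm t1 t2] at this
  generalize |t1 - t0| = x at *
  generalize |t2 - t1| = y at *
  generalize |t2 - t0| = z at *
  have key : ∀ x : ℝ, 0 < x → x ^ (-(3/2:ℝ)) = (√x)⁻¹ ^ 3 := by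
    intro x hx
    rw [Real.sqrt_eq_rpow, ← Real.rpow_neg hx.le, ← Real.rpow_natCast, ← Real.rpow_mul hx.le]
    norm_num
  rw [key x hx, key y hy, key z hz]
  obtain ⟨u, hu, rfl⟩ : ∃ u, 0 < u ∧ x = u ^ 2 := ⟨√x, by positivity, by rw [Real.sq_sqrt hx.le]⟩
  obtain ⟨v, hv, rfl⟩ : ∃ u, 0 < u ∧ y = u ^ 2 := ⟨√y, by positivity, by rw [Real.sq_sqrt hy.le]⟩
  obtain ⟨w, hw, rfl⟩ : ∃ u, 0 < u ∧ z = u ^ 2 := ⟨√z, by positivity, by rw [Real.sq_sqrt hz.le]⟩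
  rw [Real.sqrt_sq hu.le, Real.sqrt_sq hv.le, Real.sqrt_sq hw.le]
  have hc : u * (v * w) ≤ 2 * (v ^ 3 + w ^ 3) := by
    have h4 : u ≤ v + w := by nlinarith [mul_pos hv hw]
    have : u * (v * w) ≤ (v + w) * (v * w) := by gcongr
    nlinarith [mul_nonneg (add_nonneg hv.le hw.le) (sq_nonneg (v - w)), pow_pos hv 3, pow_pos hw 3]
  have : (u^2)⁻¹ * ((v^2)⁻¹ * (w^2)⁻¹) = (u * (v * w)) / (u^3 * v^3 * w^3) := by
    field_simp
  rw [this]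
  have : 2 * u⁻¹ ^ 3 * (v⁻¹ ^ 3 + w⁻¹ ^ 3) = (2 * (v ^ 3 + w ^ 3)) / (u^3 * v^3 * w^3) := by
    field_simp
    ring
  rw [this]
  gcongr

/-! ### Pairwise products -/

lemma lintegral_fin_cons (k : ℕ) (f : (Fin (k+1) → ℝ) → ℝ≥0∞) (hf : Measurable f) :
    ∫⁻ t, f t = ∫⁻ x : ℝ, ∫⁻ t : Fin k → ℝ, f (Fin.cons x t) := by
  have h := (volume_preserving_piFinSuccAbove (fun _ : Fin (k+1) => ℝ) 0).symm
  rw [← h.lintegral_comp hf, Measure.volume_eq_prod, lintegral_prod]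
  · simp [MeasurableEquiv.piFinSuccAbove, Fin.insertNthEquiv]
  · exact (hf.comp h.measurable).aemeasurable

lemma meas_cons (k : ℕ) : Measurable (fun p : ℝ × (Fin k → ℝ) => (Fin.cons p.1 p.2 : Fin (k+1) → ℝ)) := by
  rw [measurable_pi_iff]
  intro i
  refine Fin.cases ?_ (fun j => ?_) i
  · simpa using measurable_fst
  · simp only [Fin.cons_succ]
    fun_prop

/-- Product of `φ` over all pairs of differences from the history `H` and `t`. -/
def PW (φ : ℝ → ℝ≥0∞) : (k : ℕ) → List ℝ → (Fin k → ℝ) → ℝ≥0∞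
  | 0, _, _ => 1
  | k+1, H, t => (H.map (fun h => φ (t 0 - h))).prod * PW φ k (t 0 :: H) (Fin.tail t)

lemma PW_cons (φ : ℝ → ℝ≥0∞) (k : ℕ) (H : List ℝ) (x : ℝ) (t : Fin k → ℝ) :
    PW φ (k+1) H (Fin.cons x t) = (H.map (fun h => φ (x - h))).prod * PW φ k (x :: H) t := by
  simp [PW]

lemma PW_closed (φ : ℝ → ℝ≥0∞) (k : ℕ) : ∀ (H : List ℝ) (t : Fin k → ℝ),
    PW φ k H t = (∏ i, (H.map (fun h => φ (t i - h))).prod) *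
      ∏ i, ∏ j ∈ Finset.Ioi i, φ (t j - t i) := by
  induction k with
  | zero => intro H t; simp [PW]
  | succ k ih =>
    intro H t
    rw [PW, ih, Fin.prod_univ_succ, Fin.prod_univ_succ, Fin.prod_Ioi_zero]
    simp only [Fin.prod_Ioi_succ, List.map_cons, List.prod_cons, Finset.prod_mul_distrib, Fin.tail]
    ring

lemma PW_single (φ : ℝ → ℝ≥0∞) (k : ℕ) (t0 : ℝ) (t : Fin k → ℝ) :
    PW φ k [t0] t = ∏ i, ∏ j ∈ Finset.Ioi i, φ ((Fin.cons t0 t : Fin (k+1) → ℝ) j -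
      (Fin.cons t0 t : Fin (k+1) → ℝ) i) := by
  rw [PW_closed, Fin.prod_univ_succ, Fin.prod_Ioi_zero]
  simp only [Fin.prod_Ioi_succ, Fin.cons_succ, Fin.cons_zero]
  simp

lemma meas_list_prod {Ω : Type*} [MeasurableSpace Ω] (φ : ℝ → ℝ≥0∞) (hφ : Measurable φ) (g : Ω → ℝ)
    (hg : Measurable g) (H : List ℝ) : Measurable (fun ω => (H.map (fun h => φ (g ω - h))).prod) := by
  induction H with
  | nil => simp
  | cons a H ih =>
    simp only [List.map_cons, List.prod_cons]
    exact (hφ.comp (hg.sub_const a)).mul ih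

lemma meas_PW (φ : ℝ → ℝ≥0∞) (hφ : Measurable φ) (k : ℕ) (H : List ℝ) : Measurable (PW φ k H) := by
  have : PW φ k H = fun t => (∏ i, (H.map (fun h => φ (t i - h))).prod) *
      ∏ i, ∏ j ∈ Finset.Ioi i, φ (t j - t i) := by
    ext t; exact PW_closed φ k H t
  rw [this]
  refine Measurable.mul ?_ ?_
  · refine Finset.measurable_prod _ fun i _ => ?_
    exact meas_list_prod φ hφ _ (measurable_pi_apply i) H
  · refine Finset.measurable_prod _ fun i _ => Finset.measurable_prod _ fun j _ => ?_
    exact hφ.comp ((measurable_pi_apply j).sub (measurable_pi_apply i))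

lemma PW_mul (φ ψ : ℝ → ℝ≥0∞) (k : ℕ) (H : List ℝ) (t : Fin k → ℝ) :
    PW (fun τ => φ τ * ψ τ) k H t = PW φ k H t * PW ψ k H t := by
  rw [PW_closed, PW_closed, PW_closed]
  simp only [Finset.prod_mul_distrib, List.prod_map_mul]
  ring

/-- Exponent bookkeeping. -/
def ee : ℕ → ℕ → ℕ
  | 0, _ => 0
  | k+1, m => (m - 1) + ee k (m + 1)

lemma ee_closed (k : ℕ) : ∀ m, 2 * ee k (m + 1) = k * (2 * m + k - 1) := by
  induction k with
  | zero => intro m; simp [ee]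
  | succ k ih =>
    intro m
    have := ih (m + 1)
    simp only [ee]
    rw [mul_add, this]
    rcases k with _ | k
    · simp
    · rw [show 2 * (m + 1) + (k + 1) - 1 = 2 * m + k + 2 by omega,
        show 2 * m + (k + 1 + 1) - 1 = 2 * m + k + 1 by omega, Nat.add_sub_cancel]
      ring

lemma J_bound (k : ℕ) : ∀ m, 2 ≤ m → ∃ C : ℝ, 0 ≤ C ∧ ∀ b : ℝ, 0 < b → ∀ H : List ℝ, H.length = m →
    ∫⁻ t, PW (ker1 b) k H t ≤ ENNReal.ofReal (C * (b⁻¹) ^ (ee k m)) := by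
  induction k with
  | zero =>
    intro m hm
    refine ⟨1, zero_le_one, fun b hb H hH => ?_⟩
    simp [PW, ee, volume_pi]
  | succ k ih =>
    intro m hm
    obtain ⟨C, hC, h⟩ := ih (m + 1) (by omega)
    refine ⟨C * (2 * m), by positivity, fun b hb H hH => ?_⟩
    rw [lintegral_fin_cons _ _ (meas_PW _ (meas_ker1 b) _ _)]
    simp only [PW_cons]
    calc _ ≤ ∫⁻ x : ℝ, (H.map (fun h => ker1 b (x - h))).prod *
          ENNReal.ofReal (C * (b⁻¹) ^ (ee k (m+1))) := by
          refine lintegral_mono fun x => ?_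
          rw [lintegral_const_mul _ (meas_PW _ (meas_ker1 b) _ _)]
          gcongr
          exact h b hb _ (by simp [hH])
      _ = (∫⁻ x : ℝ, (H.map (fun h => ker1 b (x - h))).prod) *
          ENNReal.ofReal (C * (b⁻¹) ^ (ee k (m+1))) :=
          lintegral_mul_const _ (meas_list_prod _ (meas_ker1 b) _ measurable_id _)
      _ ≤ ENNReal.ofReal (2 * m * (b⁻¹) ^ (m - 1)) *
          ENNReal.ofReal (C * (b⁻¹) ^ (ee k (m+1))) := by
          gcongr
          have := lint_prod_ker b hb H (by omega)
          rwa [hH] at this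
      _ = _ := by
          rw [← ENNReal.ofReal_mul (by positivity)]
          congr 1
          rw [ee, pow_add]; ring

lemma J_top (k : ℕ) : ∃ C : ℝ, 0 ≤ C ∧ ∀ b : ℝ, 0 < b → ∀ t0 : ℝ,
    ∫⁻ t, PW (ker1 b) (k+2) [t0] t ≤ ENNReal.ofReal (C * (b⁻¹) ^ (ee k 3 + 1)) := by
  obtain ⟨C, hC, h⟩ := J_bound k 3 (by omega)
  refine ⟨C * 64, by positivity, fun b hb t0 => ?_⟩
  set c := ENNReal.ofReal (C * (b⁻¹) ^ (ee k 3)) with hc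
  set I := ENNReal.ofReal (2 / ((3/2:ℝ) - 1) * b ^ (1 - (3/2:ℝ))) with hI
  have hkm : ∀ a, Measurable (fun x => kp b (3/2) (x - a)) := fun a =>
    (meas_kp b _).comp (measurable_id.sub_const a)
  have hkm2 : ∀ a a', Measurable (fun x => kp b (3/2) (x - a) + kp b (3/2) (x - a')) := fun a a' =>
    (hkm a).add (hkm a')
  have h1 : ∀ t1, ∫⁻ t, PW (ker1 b) (k+2) [t0] (Fin.cons t1 t) ≤
      2 * kp b (3/2) (t1 - t0) * (I + I) * c := by
    intro t1
    rw [lintegral_fin_cons _ (fun t => PW (ker1 b) (k+2) [t0] (Fin.cons t1 t))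
      ((meas_PW _ (meas_ker1 b) _ _).comp ((meas_cons _).comp measurable_prodMk_left))]
    simp only [PW_cons]
    calc _ ≤ ∫⁻ t2, 2 * kp b (3/2) (t1 - t0) * (kp b (3/2) (t2 - t1) + kp b (3/2) (t2 - t0)) * c := by
          refine lintegral_mono fun t2 => ?_
          rw [lintegral_const_mul _ ((meas_PW _ (meas_ker1 b) _ _).const_mul _),
            lintegral_const_mul _ (meas_PW _ (meas_ker1 b) _ _), ← mul_assoc]
          refine mul_le_mul' ?_ (h b hb _ (by simp))
          simpa using ker_pair b hb t0 t1 t2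
      _ = 2 * kp b (3/2) (t1 - t0) * (∫⁻ t2, kp b (3/2) (t2 - t1) + kp b (3/2) (t2 - t0)) * c := by
          rw [lintegral_mul_const _ ((hkm2 t1 t0).const_mul _),
            lintegral_const_mul _ (hkm2 t1 t0)]
      _ ≤ _ := by
          gcongr
          rw [lintegral_add_left (hkm t1)]
          exact add_le_add (lint_kp_sub b _ t1 hb (by norm_num)) (lint_kp_sub b _ t0 hb (by norm_num))
  rw [lintegral_fin_cons _ _ (meas_PW _ (meas_ker1 b) _ _)]
  refine (lintegral_mono h1).trans ?_
  rw [lintegral_mul_const _ (((hkm t0).const_mul _).mul_const _),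
    lintegral_mul_const _ ((hkm t0).const_mul _), lintegral_const_mul _ (hkm t0)]
  calc _ ≤ 2 * I * (I + I) * c := by
        gcongr
        exact lint_kp_sub b _ t0 hb (by norm_num)
    _ = _ := by
        rw [← ENNReal.ofReal_add (by positivity) (by positivity),
          show (2:ℝ≥0∞) = ENNReal.ofReal 2 by simp,
          ← ENNReal.ofReal_mul (by positivity), ← ENNReal.ofReal_mul (by positivity),
          ← ENNReal.ofReal_mul (by positivity)]
        congr 1
        have : b ^ (1 - (3/2:ℝ)) * b ^ (1 - (3/2:ℝ)) = b⁻¹ := by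
          rw [← Real.rpow_add hb, ← Real.rpow_neg_one]; norm_num
        rw [pow_succ, ← this]; ring

/-! ### Incidences and refinement -/

lemma cont_mom (n : ℕ) : Continuous (mom n) := by
  unfold mom; fun_prop

/-- `X 1_E`. -/
def aE (n : ℕ) (E : Set (Pt n)) (z : Pt n) : ℝ≥0∞ := volume {s : ℝ | (s, z.2 + s • mom n z.1) ∈ E}

/-- `X^* 1_F`. -/
def bF (n : ℕ) (F : Set (Pt n)) (x : Pt n) : ℝ≥0∞ := volume {t : ℝ | (t, x.2 - x.1 • mom n t) ∈ F}

lemma cont_A (n : ℕ) : Continuous (fun p : Pt n × ℝ => ((p.2, p.1.2 + p.2 • mom n p.1.1) : Pt n)) := by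
  have := cont_mom n
  fun_prop

lemma cont_B (n : ℕ) : Continuous (fun p : Pt n × ℝ => ((p.2, p.1.2 - p.1.1 • mom n p.2) : Pt n)) := by
  have := cont_mom n
  fun_prop

lemma meas_aE (n : ℕ) (E : Set (Pt n)) (hE : MeasurableSet E) : Measurable (aE n E) :=
  measurable_measure_prodMk_left ((cont_A n).measurable hE)

lemma meas_bF (n : ℕ) (F : Set (Pt n)) (hF : MeasurableSet F) : Measurable (bF n F) :=
  measurable_measure_prodMk_left ((cont_B n).measurable hF)

lemma meas_aset (n : ℕ) (E : Set (Pt n)) (hE : MeasurableSet E) (z : Pt n) :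
    MeasurableSet {s : ℝ | (s, z.2 + s • mom n z.1) ∈ E} :=
  ((cont_A n).measurable.comp measurable_prodMk_left) hE

lemma meas_bset (n : ℕ) (F : Set (Pt n)) (hF : MeasurableSet F) (x : Pt n) :
    MeasurableSet {t : ℝ | (t, x.2 - x.1 • mom n t) ∈ F} :=
  ((cont_B n).measurable.comp measurable_prodMk_left) hF

/-- Total number of incidences. -/
def inc (n : ℕ) (E F : Set (Pt n)) : ℝ≥0∞ := ∫⁻ z in F, aE n E z

lemma aE_eq (n : ℕ) (E : Set (Pt n)) (hE : MeasurableSet E) (z : Pt n) :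
    aE n E z = ∫⁻ s : ℝ, E.indicator 1 (s, z.2 + s • mom n z.1) := by
  rw [aE, ← lintegral_indicator_one (meas_aset n E hE z)]
  rfl

lemma bF_eq (n : ℕ) (E : Set (Pt n)) (hE : MeasurableSet E) (x : Pt n) :
    bF n E x = ∫⁻ t : ℝ, E.indicator 1 (t, x.2 - x.1 • mom n t) := by
  rw [bF, ← lintegral_indicator_one (meas_bset n E hE x)]
  rfl

lemma inc_dual (n : ℕ) (E F : Set (Pt n)) (hE : MeasurableSet E) (hF : MeasurableSet F) :
    inc n E F = ∫⁻ x in E, bF n F x := by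
  have mE : Measurable (E.indicator (1 : Pt n → ℝ≥0∞)) := measurable_one.indicator hE
  have mF : Measurable (F.indicator (1 : Pt n → ℝ≥0∞)) := measurable_one.indicator hF
  have cm := (cont_mom n).measurable
  calc inc n E F = ∫⁻ z, F.indicator 1 z * aE n E z := by
        rw [inc, ← lintegral_indicator hF]
        congr 1 with z
        by_cases h : z ∈ F <;> simp [h]
    _ = ∫⁻ t : ℝ, ∫⁻ y, F.indicator 1 (t, y) * aE n E (t, y) := by
        rw [Measure.volume_eq_prod, lintegral_prod]
        exact (mF.mul (meas_aE n E hE)).aemeasurable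
    _ = ∫⁻ t : ℝ, ∫⁻ y, ∫⁻ s : ℝ, F.indicator 1 (t, y) * E.indicator 1 (s, y + s • mom n t) := by
        congr 1 with t; congr 1 with y
        rw [lintegral_const_mul _ (show Measurable (fun s : ℝ => E.indicator 1 (s, y + s • mom n t)) from
          mE.comp ((cont_A n).measurable.comp
          (measurable_prodMk_left (x := ((t, y) : Pt n))))), aE_eq n E hE]
    _ = ∫⁻ t : ℝ, ∫⁻ s : ℝ, ∫⁻ y, F.indicator 1 (t, y) * E.indicator 1 (s, y + s • mom n t) := by
        congr 1 with t
        apply lintegral_lintegral_swap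
        apply Measurable.aemeasurable
        exact (mF.comp (f := fun p : (Fin n → ℝ) × ℝ => ((t, p.1) : Pt n)) (by fun_prop)).mul
          (mE.comp (f := fun p : (Fin n → ℝ) × ℝ => ((p.2, p.1 + p.2 • mom n t) : Pt n)) (by fun_prop))
    _ = ∫⁻ t : ℝ, ∫⁻ s : ℝ, ∫⁻ x, F.indicator 1 (t, x - s • mom n t) * E.indicator 1 (s, x) := by
        congr 1 with t; congr 1 with s
        rw [← lintegral_sub_right_eq_self _ (s • mom n t)]
        simp
    _ = ∫⁻ s : ℝ, ∫⁻ t : ℝ, ∫⁻ x, F.indicator 1 (t, x - s • mom n t) * E.indicator 1 (s, x) := by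
        apply lintegral_lintegral_swap
        apply Measurable.aemeasurable
        apply Measurable.lintegral_prod_right'
          (f := fun p : (ℝ × ℝ) × (Fin n → ℝ) => F.indicator 1 (p.1.1, p.2 - p.1.2 • mom n p.1.1) *
            E.indicator 1 (p.1.2, p.2))
        exact (mF.comp (f := fun p : (ℝ × ℝ) × (Fin n → ℝ) => ((p.1.1, p.2 - p.1.2 • mom n p.1.1) : Pt n))
          (by fun_prop)).mul
          (mE.comp (f := fun p : (ℝ × ℝ) × (Fin n → ℝ) => ((p.1.2, p.2) : Pt n)) (by fun_prop))
    _ = ∫⁻ s : ℝ, ∫⁻ x, ∫⁻ t : ℝ, F.indicator 1 (t, x - s • mom n t) * E.indicator 1 (s, x) := by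
        congr 1 with s
        apply lintegral_lintegral_swap
        apply Measurable.aemeasurable
        exact (mF.comp (f := fun p : ℝ × (Fin n → ℝ) => ((p.1, p.2 - s • mom n p.1) : Pt n))
          (by fun_prop)).mul
          (mE.comp (f := fun p : ℝ × (Fin n → ℝ) => ((s, p.2) : Pt n)) (by fun_prop))
    _ = ∫⁻ s : ℝ, ∫⁻ x, bF n F (s, x) * E.indicator 1 (s, x) := by
        congr 1 with s; congr 1 with x
        rw [lintegral_mul_const _ (show Measurable (fun t : ℝ => F.indicator 1 (t, x - s • mom n t)) from
          mF.comp ((cont_B n).measurable.comp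
          (measurable_prodMk_left (x := ((s, x) : Pt n))))), bF_eq n F hF]
    _ = ∫⁻ x, bF n F x * E.indicator 1 x := by
        rw [Measure.volume_eq_prod, lintegral_prod]
        exact ((meas_bF n F hF).mul mE).aemeasurable
    _ = _ := by
        rw [← lintegral_indicator hE]
        congr 1 with z
        by_cases h : z ∈ E <;> simp [h]

lemma bF_mono (n : ℕ) {F F' : Set (Pt n)} (h : F ⊆ F') (x : Pt n) : bF n F x ≤ bF n F' x :=
  measure_mono fun _ ht => h ht

/-- Successive refinements. -/
def RR (n : ℕ) (a b : ℝ≥0∞) (E F : Set (Pt n)) : ℕ → Set (Pt n) × Set (Pt n)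
  | 0 => (E, F)
  | k+1 => ({x | x ∈ (RR n a b E F k).1 ∧ b ≤ bF n (RR n a b E F k).2 x},
            {z | z ∈ (RR n a b E F k).2 ∧ a ≤ aE n (RR n a b E F k).1 z})

lemma RR_meas (n : ℕ) (a b : ℝ≥0∞) (E F : Set (Pt n)) (hE : MeasurableSet E) (hF : MeasurableSet F) (k : ℕ) :
    MeasurableSet (RR n a b E F k).1 ∧ MeasurableSet (RR n a b E F k).2 := by
  induction k with
  | zero => exact ⟨hE, hF⟩
  | succ k ih =>
    exact ⟨ih.1.inter (measurableSet_le measurable_const (meas_bF n _ ih.2)),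
      ih.2.inter (measurableSet_le measurable_const (meas_aE n _ ih.1))⟩

lemma RR_sub (n : ℕ) (a b : ℝ≥0∞) (E F : Set (Pt n)) (k : ℕ) :
    (RR n a b E F k).1 ⊆ E ∧ (RR n a b E F k).2 ⊆ F := by
  induction k with
  | zero => exact ⟨subset_rfl, subset_rfl⟩
  | succ k ih => exact ⟨fun x hx => ih.1 hx.1, fun x hx => ih.2 hx.1⟩

lemma RR_step (n : ℕ) (a b : ℝ≥0∞) (E F : Set (Pt n)) (hE : MeasurableSet E) (hF : MeasurableSet F) (k : ℕ) :
    inc n (RR n a b E F k).1 (RR n a b E F k).2 ≤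
      inc n (RR n a b E F (k+1)).1 (RR n a b E F (k+1)).2 +
      b * volume ((RR n a b E F k).1 \ (RR n a b E F (k+1)).1) +
      a * volume ((RR n a b E F k).2 \ (RR n a b E F (k+1)).2) := by
  obtain ⟨m1, m2⟩ := RR_meas n a b E F hE hF k
  obtain ⟨m1', m2'⟩ := RR_meas n a b E F hE hF (k+1)
  have s1 : (RR n a b E F (k+1)).1 ⊆ (RR n a b E F k).1 := fun x hx => hx.1
  have s2 : (RR n a b E F (k+1)).2 ⊆ (RR n a b E F k).2 := fun x hx => hx.1
  have b1 : ∀ x ∈ (RR n a b E F k).1 \ (RR n a b E F (k+1)).1, bF n (RR n a b E F k).2 x ≤ b := by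
    intro x hx
    by_contra hlt
    exact hx.2 ⟨hx.1, (not_le.1 hlt).le⟩
  have b2 : ∀ x ∈ (RR n a b E F k).2 \ (RR n a b E F (k+1)).2, aE n (RR n a b E F k).1 x ≤ a := by
    intro x hx
    by_contra hlt
    exact hx.2 ⟨hx.1, (not_le.1 hlt).le⟩
  generalize (RR n a b E F (k+1)).1 = E' at *
  generalize (RR n a b E F (k+1)).2 = F' at *
  generalize (RR n a b E F k).1 = E0 at *
  generalize (RR n a b E F k).2 = F0 at *
  have h1 : inc n E0 F0 ≤ inc n E0 F' + a * volume (F0 \ F') := by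
    rw [inc, ← lintegral_inter_add_sdiff (μ := volume) (aE n E0) F0 m2', inter_eq_right.2 s2]
    refine add_le_add le_rfl ?_
    rw [← setLIntegral_const]
    exact setLIntegral_mono' (m2.diff m2') b2
  have h2 : inc n E0 F' ≤ inc n E' F' + b * volume (E0 \ E') := by
    rw [inc_dual n E0 F' m1 m2', inc_dual n E' F' m1' m2',
      ← lintegral_inter_add_sdiff (μ := volume) (bF n F') E0 m1', inter_eq_right.2 s1]
    refine add_le_add le_rfl ?_
    rw [← setLIntegral_const]
    exact setLIntegral_mono' (m1.diff m1') fun x hx => (bF_mono n s2 x).trans (b1 x hx)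
  exact h1.trans (by gcongr)

lemma RR_inv (n : ℕ) (a b : ℝ≥0∞) (E F : Set (Pt n)) (hE : MeasurableSet E) (hF : MeasurableSet F) (k : ℕ) :
    inc n E F ≤ inc n (RR n a b E F k).1 (RR n a b E F k).2 +
      b * volume (E \ (RR n a b E F k).1) + a * volume (F \ (RR n a b E F k).2) := by
  induction k with
  | zero => simp [RR]
  | succ k ih =>
    refine ih.trans ?_
    have hs := RR_step n a b E F hE hF k
    obtain ⟨m1, m2⟩ := RR_meas n a b E F hE hF k
    obtain ⟨m1', m2'⟩ := RR_meas n a b E F hE hF (k+1)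
    have s1 : (RR n a b E F (k+1)).1 ⊆ (RR n a b E F k).1 := fun x hx => hx.1
    have s2 : (RR n a b E F (k+1)).2 ⊆ (RR n a b E F k).2 := fun x hx => hx.1
    obtain ⟨q1, q2⟩ := RR_sub n a b E F k
    generalize (RR n a b E F (k+1)).1 = E' at *
    generalize (RR n a b E F (k+1)).2 = F' at *
    generalize (RR n a b E F k).1 = E0 at *
    generalize (RR n a b E F k).2 = F0 at *
    have v : ∀ {G G0 G' : Set (Pt n)}, G' ⊆ G0 → G0 ⊆ G → MeasurableSet G0 → 
        volume (G0 \ G') + volume (G \ G0) = volume (G \ G') := by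
      intro G G0 G' h1 h2 h3
      rw [← measure_inter_add_sdiff (G \ G') h3]
      congr 2
      · ext x; simp only [mem_diff, mem_inter_iff]; constructor
        · rintro ⟨p, q⟩; exact ⟨⟨h2 p, q⟩, p⟩
        · rintro ⟨⟨p, q⟩, r⟩; exact ⟨r, q⟩
      · ext x; simp only [mem_diff, mem_inter_iff]; constructor
        · rintro ⟨p, q⟩; exact ⟨⟨p, fun h => q (h1 h)⟩, q⟩
        · rintro ⟨⟨p, q⟩, r⟩; exact ⟨p, r⟩
    rw [← v s1 q1 m1, ← v s2 q2 m2, mul_add, mul_add]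
    calc _ ≤ (inc n E' F' + b * volume (E0 \ E') + a * volume (F0 \ F')) + b * volume (E \ E0) +
          a * volume (F \ F0) := by gcongr
      _ = _ := by ring

/-! ### Chains -/

/-- Endpoint of a chain of `k` steps. -/
def endp (n k : ℕ) (z : Pt n) (s t : Fin k → ℝ) : Pt n :=
  ((Fin.cons z.1 t : Fin (k+1) → ℝ) (Fin.last k),
    z.2 + ∑ i : Fin k, s i • (mom n ((Fin.cons z.1 t : Fin (k+1) → ℝ) i.castSucc) - mom n (t i)))

lemma endp_cons (n k : ℕ) (z : Pt n) (s0 t1 : ℝ) (s t : Fin k → ℝ) :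
    endp n (k+1) z (Fin.cons s0 s) (Fin.cons t1 t) =
      endp n k (t1, (z.2 + s0 • mom n z.1) - s0 • mom n t1) s t := by
  unfold endp
  ext1
  · simp only [← Fin.succ_last, Fin.cons_succ]
  · simp only [Fin.sum_univ_succ, Fin.cons_succ, Fin.cons_zero, Fin.castSucc_zero, ← Fin.succ_castSucc]
    rw [smul_sub]
    abel

lemma meas_endp (n k : ℕ) (z : Pt n) :
    Measurable (fun p : (Fin k → ℝ) × (Fin k → ℝ) => endp n k z p.1 p.2) := by
  have cm := (cont_mom n).measurable
  have h1 : ∀ i, Measurable (fun p : (Fin k → ℝ) × (Fin k → ℝ) =>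
      (Fin.cons z.1 p.2 : Fin (k+1) → ℝ) i) := by
    intro i
    refine Fin.cases ?_ (fun j => ?_) i
    · simp
    · simp only [Fin.cons_succ]
      fun_prop
  unfold endp
  refine (h1 _).prodMk (measurable_const.add ?_)
  refine Finset.measurable_sum _ fun i _ => ?_
  have hs : Measurable (fun p : (Fin k → ℝ) × (Fin k → ℝ) => p.1 i) := by fun_prop
  have ht : Measurable (fun p : (Fin k → ℝ) × (Fin k → ℝ) => p.2 i) := by fun_prop
  exact hs.smul ((cm.comp (h1 _)).sub (cm.comp ht))

lemma PW_far_prod (δ : ℝ) (H : List ℝ) (x : ℝ) (hx : ∀ h ∈ H, δ ≤ |x - h|) :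
    (H.map (fun h => far δ (x - h))).prod = 1 := by
  apply List.prod_eq_one
  intro y hy
  obtain ⟨h, hh, rfl⟩ := List.mem_map.1 hy
  simp [far, hx h hh]

lemma near_meas (δ : ℝ) (H : List ℝ) :
    MeasurableSet {x : ℝ | ∀ h ∈ H, δ ≤ |x - h|} ∧
    volume ({x : ℝ | ∀ h ∈ H, δ ≤ |x - h|}ᶜ) ≤ H.length * ENNReal.ofReal (2 * δ) := by
  induction H with
  | nil => simp
  | cons a H ih =>
    have e : {x : ℝ | ∀ h ∈ a :: H, δ ≤ |x - h|} = {x | δ ≤ |x - a|} ∩ {x : ℝ | ∀ h ∈ H, δ ≤ |x - h|} := by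
      ext x; simp
    rw [e]
    refine ⟨(measurableSet_le measurable_const (by fun_prop)).inter ih.1, ?_⟩
    rw [compl_inter]
    refine (measure_union_le _ _).trans ?_
    rw [List.length_cons]
    push_cast
    rw [add_mul, one_mul, add_comm]
    refine add_le_add ih.2 ?_
    have : {x | δ ≤ |x - a|}ᶜ = Metric.ball a δ := by
      ext x; simp [Real.dist_eq]
    rw [this, Real.volume_ball]

/-- The chain integrand. -/
def chi (n k : ℕ) (F : Set (Pt n)) (δ : ℝ) (H : List ℝ) (z : Pt n) (s t : Fin k → ℝ) : ℝ≥0∞ :=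
  PW (far δ) k H t * F.indicator 1 (endp n k z s t)

lemma meas_chi (n k : ℕ) (F : Set (Pt n)) (hF : MeasurableSet F) (δ : ℝ) (H : List ℝ) (z : Pt n) :
    Measurable (fun p : (Fin k → ℝ) × (Fin k → ℝ) => chi n k F δ H z p.1 p.2) := by
  unfold chi
  exact ((meas_PW _ (meas_far δ) k H).comp measurable_snd).mul
    (((measurable_one (α := ℝ≥0∞)).indicator hF).comp (meas_endp n k z))

lemma gen_split (k : ℕ) (Φ : (Fin (k+1) → ℝ) → (Fin (k+1) → ℝ) → ℝ≥0∞)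
    (m : Measurable (fun p : (Fin (k+1) → ℝ) × (Fin (k+1) → ℝ) => Φ p.1 p.2)) :
    ∫⁻ s, ∫⁻ t, Φ s t =
    ∫⁻ s0 : ℝ, ∫⁻ t1 : ℝ, ∫⁻ s, ∫⁻ t, Φ (Fin.cons s0 s) (Fin.cons t1 t) := by
  have mm : Measurable (fun s => ∫⁻ t, Φ s t) := m.lintegral_prod_right'
  rw [lintegral_fin_cons k _ mm]
  refine lintegral_congr fun s0 => ?_
  have m3 : Measurable (fun p : ((Fin k → ℝ) × ℝ) × (Fin k → ℝ) =>
      Φ (Fin.cons s0 p.1.1) (Fin.cons p.1.2 p.2)) := by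
    have c1 : Measurable (fun p : ((Fin k → ℝ) × ℝ) × (Fin k → ℝ) => (Fin.cons s0 p.1.1 : Fin (k+1) → ℝ)) :=
      (meas_cons k).comp (measurable_const.prodMk (measurable_fst.comp measurable_fst))
    have c2 : Measurable (fun p : ((Fin k → ℝ) × ℝ) × (Fin k → ℝ) => (Fin.cons p.1.2 p.2 : Fin (k+1) → ℝ)) :=
      (meas_cons k).comp ((measurable_snd.comp measurable_fst).prodMk measurable_snd)
    exact m.comp (c1.prodMk c2)
  have m2 : ∀ s', Measurable (fun t => Φ s' t) := fun s' =>
    m.comp (measurable_const.prodMk measurable_id)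
  have m4 : Measurable (fun p : (Fin k → ℝ) × ℝ => ∫⁻ t, Φ (Fin.cons s0 p.1) (Fin.cons p.2 t)) :=
    m3.lintegral_prod_right'
  calc ∫⁻ s, ∫⁻ t, Φ (Fin.cons s0 s) t
      = ∫⁻ s, ∫⁻ t1 : ℝ, ∫⁻ t, Φ (Fin.cons s0 s) (Fin.cons t1 t) := by
        refine lintegral_congr fun s => ?_
        exact lintegral_fin_cons k _ (m2 _)
    _ = _ := lintegral_lintegral_swap m4.aemeasurable

lemma chi_split (n k : ℕ) (F : Set (Pt n)) (hF : MeasurableSet F) (δ : ℝ) (H : List ℝ) (z : Pt n) :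
    ∫⁻ s, ∫⁻ t, chi n (k+1) F δ H z s t =
    ∫⁻ s0 : ℝ, ∫⁻ t1 : ℝ, ∫⁻ s, ∫⁻ t, chi n (k+1) F δ H z (Fin.cons s0 s) (Fin.cons t1 t) :=
  gen_split k (chi n (k+1) F δ H z) (meas_chi n (k+1) F hF δ H z)

lemma chain (n N : ℕ) (a b : ℝ≥0∞) (E F : Set (Pt n)) (hE : MeasurableSet E) (hF : MeasurableSet F)
    (δ : ℝ) (hb : b ≠ ⊤) (hδ : N * ENNReal.ofReal (2 * δ) ≤ b / 2) (k : ℕ) :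
    ∀ H : List ℝ, H.length + k ≤ N + 1 → ∀ z ∈ (RR n a b E F (2 * k)).2,
      (a * (b / 2)) ^ k ≤ ∫⁻ s, ∫⁻ t, chi n k F δ H z s t := by
  induction k with
  | zero =>
    intro H _ z hz
    have : z ∈ F := hz
    simp [chi, PW, endp, this, volume_pi]
  | succ k ih =>
    intro H hH z hz
    rw [chi_split n k F hF]
    have hz2 : a ≤ aE n (RR n a b E F (2 * k + 1)).1 z := hz.2
    set S := {s : ℝ | (s, z.2 + s • mom n z.1) ∈ (RR n a b E F (2 * k + 1)).1} with hS
    have mS : MeasurableSet S := meas_aset n _ (RR_meas n a b E F hE hF _).1 z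
    have inner : ∀ s0 ∈ S, (b / 2) * (a * (b / 2)) ^ k ≤
        ∫⁻ t1 : ℝ, ∫⁻ s, ∫⁻ t, chi n (k+1) F δ H z (Fin.cons s0 s) (Fin.cons t1 t) := by
      intro s0 hs0
      have hb2 : b ≤ bF n (RR n a b E F (2 * k)).2 (s0, z.2 + s0 • mom n z.1) := hs0.2
      set x : Pt n := (s0, z.2 + s0 • mom n z.1) with hx
      set T := {t : ℝ | (t, x.2 - x.1 • mom n t) ∈ (RR n a b E F (2 * k)).2} with hT
      have mT : MeasurableSet T := meas_bset n _ (RR_meas n a b E F hE hF _).2 x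
      set G := {x : ℝ | ∀ h ∈ H, δ ≤ |x - h|} with hG
      obtain ⟨mG, vG⟩ := near_meas δ H
      have vTG : b / 2 ≤ volume (T ∩ G) := by
        have h1 : b ≤ volume (T ∩ G) + b / 2 := by
          calc b ≤ volume T := hb2
            _ ≤ volume (T ∩ G) + volume (T \ G) := measure_le_inter_add_sdiff _ _ _
            _ ≤ _ := by
              refine add_le_add le_rfl ?_
              refine (measure_mono (fun x hx => hx.2)).trans (vG.trans (le_trans ?_ hδ))
              gcongr
              omega
        have hb3 : b / 2 ≠ ⊤ := ENNReal.div_ne_top hb (by norm_num)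
        have h2 : b / 2 + b / 2 ≤ volume (T ∩ G) + b / 2 := by rwa [ENNReal.add_halves]
        exact (ENNReal.add_le_add_iff_right hb3).1 h2
      calc (b / 2) * (a * (b / 2)) ^ k ≤ volume (T ∩ G) * (a * (b / 2)) ^ k := by gcongr
        _ = ∫⁻ t1 in T ∩ G, (a * (b / 2)) ^ k := by rw [setLIntegral_const, mul_comm]
        _ ≤ ∫⁻ t1 in T ∩ G, ∫⁻ s, ∫⁻ t, chi n (k+1) F δ H z (Fin.cons s0 s) (Fin.cons t1 t) := by
            refine setLIntegral_mono' (mT.inter mG) fun t1 ht1 => ?_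
            refine (ih (t1 :: H) (by simp; omega) _ ht1.1).trans_eq ?_
            congr 1 with s; congr 1 with t
            unfold chi
            rw [PW_cons, PW_far_prod δ H t1 ht1.2, one_mul, endp_cons]
        _ ≤ _ := setLIntegral_le_lintegral _ _
    calc (a * (b / 2)) ^ (k+1) = a * ((b / 2) * (a * (b / 2)) ^ k) := by ring
      _ ≤ volume S * ((b / 2) * (a * (b / 2)) ^ k) := mul_le_mul' hz2 le_rfl
      _ = ∫⁻ s0 in S, ((b / 2) * (a * (b / 2)) ^ k) := by rw [setLIntegral_const, mul_comm]
      _ ≤ ∫⁻ s0 in S, ∫⁻ t1 : ℝ, ∫⁻ s, ∫⁻ t, chi n (k+1) F δ H z (Fin.cons s0 s) (Fin.cons t1 t) :=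
          setLIntegral_mono' mS inner
      _ ≤ _ := setLIntegral_le_lintegral _ _

/-! ### Change of variables -/

/-- Jacobian matrix of the chain map. -/
def Dm (n : ℕ) (tt : Fin (n+1) → ℝ) : Matrix (Fin n) (Fin n) ℝ :=
  Matrix.of fun i j => mom n (tt i.castSucc) j - mom n (tt i.succ) j

lemma det_Dm (n : ℕ) (tt : Fin (n+1) → ℝ) :
    |(Dm n tt).det| = ∏ i, ∏ j ∈ Finset.Ioi i, |tt j - tt i| := by
  have h1 : (Matrix.vandermonde tt).det = ∏ i, ∏ j ∈ Finset.Ioi i, (tt j - tt i) :=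
    Matrix.det_vandermonde tt
  set B : Matrix (Fin (n+1)) (Fin (n+1)) ℝ := Matrix.of fun i j =>
    (Fin.cases (tt 0 ^ (j : ℕ)) (fun i' : Fin n => tt i'.succ ^ (j : ℕ) - tt i'.castSucc ^ (j : ℕ)) i : ℝ)
    with hB
  have h2 : (Matrix.vandermonde tt).det = B.det := by
    apply Matrix.det_eq_of_forall_row_eq_smul_add_pred (fun _ => 1)
    · intro j; simp [hB, Matrix.vandermonde]
    · intro i j; simp [hB, Matrix.vandermonde]
  have h3 : B.det = (-(Dm n tt)).det := by
    rw [Matrix.det_succ_column_zero, Fin.sum_univ_succ]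
    have : ∀ i : Fin n, B i.succ 0 = 0 := by intro i; simp [hB]
    simp only [this]
    have hb0 : B 0 0 = 1 := by simp [hB]
    simp only [hb0]
    have : B.submatrix (Fin.succAbove 0) Fin.succ = -(Dm n tt) := by
      ext i j
      simp [hB, Dm, mom]
    rw [this]
    simp
  rw [Matrix.det_neg] at h3
  have h4 : |(Dm n tt).det| = |(Matrix.vandermonde tt).det| := by
    rw [h2, h3]; simp [abs_mul]
  rw [h4, h1]
  simp [Finset.abs_prod]

lemma int_endp (n : ℕ) (F : Set (Pt n)) (hF : MeasurableSet F) (z : Pt n) (t : Fin n → ℝ)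
    (hdet : (Dm n (Fin.cons z.1 t : Fin (n+1) → ℝ)).det ≠ 0) :
    ∫⁻ s, F.indicator 1 (endp n n z s t) =
      ENNReal.ofReal |((Dm n (Fin.cons z.1 t : Fin (n+1) → ℝ)).det)⁻¹| *
        sliceVol n F ((Fin.cons z.1 t : Fin (n+1) → ℝ) (Fin.last n)) := by
  set tt := (Fin.cons z.1 t : Fin (n+1) → ℝ) with htt
  set G : Set (Fin n → ℝ) := {y | (tt (Fin.last n), y) ∈ F} with hG
  have mG : MeasurableSet G := measurable_prodMk_left hF
  set L := Matrix.toLin' (Dm n tt).transpose with hL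
  have key : ∀ s, F.indicator (1 : Pt n → ℝ≥0∞) (endp n n z s t) =
      (L ⁻¹' ((fun y => z.2 + y) ⁻¹' G)).indicator 1 s := by
    intro s
    have : endp n n z s t = (tt (Fin.last n), z.2 + L s) := by
      unfold endp
      ext1
      · rfl
      · simp only
        congr 1
        ext j
        simp [hL, Matrix.toLin'_apply, Matrix.mulVec, dotProduct, Dm, htt]
        refine Finset.sum_congr rfl fun i _ => ?_
        ring
    rw [this]
    by_cases h : (tt (Fin.last n), z.2 + L s) ∈ F
    · have h' : s ∈ L ⁻¹' ((fun y => z.2 + y) ⁻¹' G) := h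
      rw [indicator_of_mem h, indicator_of_mem h']; rfl
    · have h' : s ∉ L ⁻¹' ((fun y => z.2 + y) ⁻¹' G) := h
      rw [indicator_of_notMem h, indicator_of_notMem h']
  have hLm : Measurable L := L.continuous_of_finiteDimensional.measurable
  have hdL : LinearMap.det L ≠ 0 := by rw [hL, LinearMap.det_toLin', Matrix.det_transpose]; exact hdet
  simp_rw [key]
  rw [lintegral_indicator_one (hLm ((measurable_const_add z.2) mG)),
    Measure.addHaar_preimage_linearMap _ hdL, measure_preimage_add]
  rw [hL, LinearMap.det_toLin', Matrix.det_transpose]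
  rfl

lemma far_eq (δ : ℝ) (hδ : 0 < δ) : far δ = fun τ => ker1 δ τ * ENNReal.ofReal |τ| := by
  ext τ
  unfold far ker1
  split_ifs with h
  · have : 0 < |τ| := lt_of_lt_of_le hδ h
    rw [← ENNReal.ofReal_mul (by positivity), inv_mul_cancel₀ this.ne']
    simp
  · simp

lemma chi_upper (n : ℕ) (F : Set (Pt n)) (hF : MeasurableSet F) (M : ℝ≥0∞)
    (hM : ∀ t, sliceVol n F t ≤ M) (δ : ℝ) (hδ : 0 < δ) (z : Pt n) :
    ∫⁻ s, ∫⁻ t, chi n n F δ [z.1] z s t ≤ M * ∫⁻ t, PW (ker1 δ) n [z.1] t := by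
  have m := meas_chi n n F hF δ [z.1] z
  have sw : ∫⁻ s, ∫⁻ t, chi n n F δ [z.1] z s t = ∫⁻ t, ∫⁻ s, chi n n F δ [z.1] z s t :=
    lintegral_lintegral_swap m.aemeasurable
  rw [sw, ← lintegral_const_mul _ (meas_PW _ (meas_ker1 δ) n _)]
  refine lintegral_mono fun t => ?_
  have mE : Measurable (fun s => F.indicator (1 : Pt n → ℝ≥0∞) (endp n n z s t)) :=
    ((measurable_one (α := ℝ≥0∞)).indicator hF).comp
      ((meas_endp n n z).comp (measurable_id.prodMk measurable_const))
  have e1 : ∫⁻ s, chi n n F δ [z.1] z s t =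
      PW (far δ) n [z.1] t * ∫⁻ s, F.indicator 1 (endp n n z s t) := by
    unfold chi
    exact lintegral_const_mul _ mE
  have e2 : PW (far δ) n [z.1] t = PW (ker1 δ) n [z.1] t *
      ENNReal.ofReal |(Dm n (Fin.cons z.1 t : Fin (n+1) → ℝ)).det| := by
    rw [far_eq δ hδ, PW_mul, PW_single (fun τ => ENNReal.ofReal |τ|), det_Dm,
      ENNReal.ofReal_prod_of_nonneg (fun i _ => Finset.prod_nonneg fun j _ => abs_nonneg _)]
    congr 1
    refine Finset.prod_congr rfl fun i _ => ?_
    rw [ENNReal.ofReal_prod_of_nonneg (fun j _ => abs_nonneg _)]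
  show ∫⁻ s, chi n n F δ [z.1] z s t ≤ _
  rw [e1, e2]
  by_cases hd : (Dm n (Fin.cons z.1 t : Fin (n+1) → ℝ)).det = 0
  · simp [hd]
  · rw [int_endp n F hF z t hd, mul_assoc, ← mul_assoc (ENNReal.ofReal _) (ENNReal.ofReal _),
      ← ENNReal.ofReal_mul (abs_nonneg _), ← abs_mul, mul_inv_cancel₀ hd]
    simp only [abs_one, ENNReal.ofReal_one, one_mul]
    rw [mul_comm]
    gcongr
    exact hM _

lemma core (k : ℕ) : ∃ C : ℝ, 0 < C ∧ ∀ E F : Set (Pt (k+2)), MeasurableSet E → MeasurableSet F →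
    ∀ X e f A : ℝ, 0 < X → 0 < e → 0 < f → 0 < A →
    inc (k+2) E F = ENNReal.ofReal X → volume E = ENNReal.ofReal e → volume F = ENNReal.ofReal f →
    (∀ t, sliceVol (k+2) F t ≤ ENNReal.ofReal (2 * A)) →
    (X / f) ^ (k+2) * (X / e) ^ (ee k 3 + 1 + (k+2)) ≤ C * A := by
  obtain ⟨C0, hC0, hJ⟩ := J_top k
  set n := k + 2 with hn
  have hn0 : (0:ℝ) < n := by rw [hn]; positivity
  set m := ee k 3 + 1 with hm
  refine ⟨32 ^ n * 2 * C0 * (16 * n) ^ m + 1, by positivity, ?_⟩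
  intro E F hE hF X e f A hX he hf hA hXX hee hff hs
  set a := ENNReal.ofReal (X / (4 * f)) with ha
  set b := ENNReal.ofReal (X / (4 * e)) with hb
  set δ := X / (16 * n * e) with hδ
  have hδ0 : 0 < δ := by positivity
  have hinv := RR_inv n a b E F hE hF (2 * n)
  have hne : (RR n a b E F (2 * n)).2.Nonempty := by
    by_contra hcon
    rw [not_nonempty_iff_eq_empty] at hcon
    have h0 : inc n (RR n a b E F (2 * n)).1 (RR n a b E F (2 * n)).2 = 0 := by
      rw [hcon]; simp [inc]
    rw [h0, zero_add, hXX] at hinv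
    have h1 : b * volume (E \ (RR n a b E F (2 * n)).1) + a * volume (F \ (RR n a b E F (2 * n)).2)
        ≤ ENNReal.ofReal (X / 4 + X / 4) := by
      rw [ENNReal.ofReal_add (by positivity) (by positivity)]
      refine add_le_add ?_ ?_
      · calc _ ≤ b * volume E := by gcongr; exact sdiff_subset
          _ = _ := by
            rw [hee, hb, ← ENNReal.ofReal_mul (by positivity)]; congr 1; field_simp
      · calc _ ≤ a * volume F := by gcongr; exact sdiff_subset
          _ = _ := by
            rw [hff, ha, ← ENNReal.ofReal_mul (by positivity)]; congr 1; field_simp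
    have h2 := (ENNReal.ofReal_le_ofReal_iff (by positivity)).1 (hinv.trans h1)
    linarith
  obtain ⟨z, hz⟩ := hne
  have hb2 : b / 2 = ENNReal.ofReal (X / (8 * e)) := by
    have : (2 : ℝ≥0∞) = ENNReal.ofReal 2 := by simp
    rw [hb, this, ← ENNReal.ofReal_div_of_pos (by norm_num)]
    congr 1; field_simp; norm_num
  have hN : (n : ℝ≥0∞) * ENNReal.ofReal (2 * δ) ≤ b / 2 := by
    rw [hb2, ← ENNReal.ofReal_natCast, ← ENNReal.ofReal_mul (by positivity)]
    apply ENNReal.ofReal_le_ofReal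
    rw [hδ]
    apply le_of_eq
    field_simp
    norm_num
  have h1 := chain n n a b E F hE hF δ ENNReal.ofReal_ne_top hN n [z.1] (by simp; omega) z hz
  have h2 := h1.trans (chi_upper n F hF _ hs δ hδ0 z)
  have h3 : (a * (b / 2)) ^ n ≤ ENNReal.ofReal (2 * A) * ENNReal.ofReal (C0 * (δ⁻¹) ^ m) :=
    h2.trans (by gcongr; exact hJ δ hδ0 z.1)
  rw [hb2, ha, ← ENNReal.ofReal_mul (by positivity), ← ENNReal.ofReal_mul (by positivity),
    ← ENNReal.ofReal_pow (by positivity)] at h3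
  have h4 := (ENNReal.ofReal_le_ofReal_iff (by positivity)).1 h3
  have e1 : X / (4 * f) * (X / (8 * e)) = (X / f) * (X / e) / 32 := by field_simp; norm_num
  have e2 : δ⁻¹ = 16 * n * (X / e)⁻¹ := by rw [hδ]; field_simp
  set u := X / f with hu
  set v := X / e with hv
  have hu0 : 0 < u := by positivity
  have hv0 : 0 < v := by positivity
  rw [e1, e2, div_pow, mul_pow, mul_pow (16 * (n:ℝ)), div_le_iff₀ (by positivity)] at h4
  calc u ^ n * v ^ (m + n) = u ^ n * v ^ n * v ^ m := by rw [pow_add]; ring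
    _ ≤ (2 * A * (C0 * ((16 * n) ^ m * v⁻¹ ^ m)) * 32 ^ n) * v ^ m := by gcongr
    _ = (32 ^ n * 2 * C0 * (16 * n) ^ m) * A := by
        rw [inv_pow]; field_simp
    _ ≤ _ := by nlinarith

/-! ### Reductions -/

lemma pair_eq (n : ℕ) (E F : Set (Pt n)) (hE : MeasurableSet E) (hF : MeasurableSet F) :
    pairSet n E F = inc n E F := by
  unfold pairSet pairing inc
  rw [← lintegral_indicator hF]
  refine lintegral_congr fun z => ?_
  have h1 : Xray n (ind n E) z = aE n E z := by
    rw [aE_eq n E hE, Xray]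
    refine lintegral_congr fun s => ?_
    by_cases h : (s, z.2 + s • mom n z.1) ∈ E <;> simp [ind, h]
  rw [h1]
  by_cases h : z ∈ F <;> simp [ind, h]

lemma meas_slice (n : ℕ) (F : Set (Pt n)) (hF : MeasurableSet F) : Measurable (sliceVol n F) :=
  measurable_measure_prodMk_left hF

lemma vol_slice (n : ℕ) (F : Set (Pt n)) (hF : MeasurableSet F) :
    volume F = ∫⁻ t, sliceVol n F t := by
  rw [Measure.volume_eq_prod, Measure.prod_apply hF]
  rfl

/-- The good part of `F`. -/
def goodF (n : ℕ) (F : Set (Pt n)) (M : ℝ≥0∞) : Set (Pt n) :=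
  F ∩ {z | sliceVol n F z.1 ≤ M ∧ sliceVol n F z.1 ≠ 0}

lemma meas_goodF (n : ℕ) (F : Set (Pt n)) (hF : MeasurableSet F) (M : ℝ≥0∞) :
    MeasurableSet (goodF n F M) := by
  have m : Measurable (fun z : Pt n => sliceVol n F z.1) := (meas_slice n F hF).comp measurable_fst
  refine hF.inter ((measurableSet_le m measurable_const).inter ?_)
  exact (m (measurableSet_singleton 0)).compl

lemma goodF_ae (n : ℕ) (F : Set (Pt n)) (hF : MeasurableSet F) (M : ℝ≥0∞)
    (h : ∀ᵐ t : ℝ, sliceVol n F t ≤ M) : goodF n F M =ᵐ[volume] F := by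
  have hsub : goodF n F M ⊆ F := inter_subset_left
  have hn : volume (F \ goodF n F M) = 0 := by
    rw [Measure.volume_eq_prod, Measure.measure_prod_null (hF.diff (meas_goodF n F hF M))]
    filter_upwards [h] with t ht
    show volume (Prod.mk t ⁻¹' (F \ goodF n F M)) = 0
    by_cases h0 : sliceVol n F t = 0
    · exact measure_mono_null (fun y hy => hy.1) h0
    · have : Prod.mk t ⁻¹' (F \ goodF n F M) = ∅ := by
        ext y
        simp only [mem_preimage, mem_empty_iff_false, iff_false]
        rintro ⟨h1, h2⟩
        exact h2 ⟨h1, ht, h0⟩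
      rw [this]; simp
  exact (LE.le.eventuallyLE hsub).antisymm (ae_le_set.2 hn)

lemma goodF_slice (n : ℕ) (F : Set (Pt n)) (M : ℝ≥0∞) (t : ℝ) :
    sliceVol n (goodF n F M) t ≤ M := by
  by_cases h : sliceVol n F t ≤ M
  · exact (measure_mono (fun y hy => hy.1)).trans h
  · have : {y : Fin n → ℝ | (t, y) ∈ goodF n F M} = ∅ := by
      ext y
      simp only [mem_setOf_eq, mem_empty_iff_false, iff_false]
      rintro ⟨h1, h2, h3⟩
      exact h h2
    rw [sliceVol, this]; simp

lemma inc_le_tau (n : ℕ) (E F : Set (Pt n)) (hE : MeasurableSet E) (hF : MeasurableSet F) (M : ℝ≥0∞) :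
    inc n E (goodF n F M) ≤ volume {t | sliceVol n F t ≠ 0} * volume E := by
  rw [inc_dual n E _ hE (meas_goodF n F hF M)]
  calc ∫⁻ x in E, bF n (goodF n F M) x ≤ ∫⁻ x in E, volume {t | sliceVol n F t ≠ 0} := by
        refine lintegral_mono fun x => measure_mono fun t ht => ht.2.2
    _ = _ := by rw [setLIntegral_const]

lemma norm_lower (n : ℕ) (F : Set (Pt n)) (hF : MeasurableSet F) (q r : ℝ) (hq : 0 < q) (hr : 0 < r)
    (c : ℝ≥0∞) (h : ∀ᵐ t : ℝ, sliceVol n F t ≠ 0 → c ≤ sliceVol n F t) :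
    c ^ (1 / r) * volume {t | sliceVol n F t ≠ 0} ^ (1 / q) ≤ mixedNormR n q r (ind n F) := by
  unfold mixedNormR mixedNorm mixedNormG
  have inner : ∀ t, ∫⁻ y, (ENNReal.ofReal |ind n F (t, y)|) ^ r = sliceVol n F t := by
    intro t
    have mt : MeasurableSet {y : Fin n → ℝ | (t, y) ∈ F} := measurable_prodMk_left hF
    rw [sliceVol, ← lintegral_indicator_one mt]
    refine lintegral_congr fun y => ?_
    by_cases hy : (t, y) ∈ F <;> simp [ind, hy, hr]
  simp only [inner]
  have mS : MeasurableSet {t | sliceVol n F t ≠ 0} :=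
    ((meas_slice n F hF) (measurableSet_singleton 0)).compl
  have h1 : c ^ (q / r) * volume {t | sliceVol n F t ≠ 0} ≤ ∫⁻ t, sliceVol n F t ^ (q / r) := by
    calc _ = ∫⁻ t in {t | sliceVol n F t ≠ 0}, c ^ (q / r) := by rw [setLIntegral_const]
      _ ≤ ∫⁻ t in {t | sliceVol n F t ≠ 0}, sliceVol n F t ^ (q / r) := by
        refine setLIntegral_mono_ae ((meas_slice n F hF).pow_const _).aemeasurable ?_
        filter_upwards [h] with t ht hts
        exact ENNReal.rpow_le_rpow (ht hts) (by positivity)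
      _ ≤ _ := setLIntegral_le_lintegral _ _
  calc _ = (c ^ (q / r) * volume {t | sliceVol n F t ≠ 0}) ^ (1 / q) := by
        rw [ENNReal.mul_rpow_of_nonneg _ _ (by positivity), ← ENNReal.rpow_mul]
        congr 2
        field_simp
    _ ≤ _ := ENNReal.rpow_le_rpow h1 (by positivity)

lemma vol_bounds (n : ℕ) (F : Set (Pt n)) (hF : MeasurableSet F) (c M : ℝ≥0∞)
    (h : ∀ᵐ t : ℝ, sliceVol n F t ≠ 0 → c ≤ sliceVol n F t ∧ sliceVol n F t ≤ M) :
    c * volume {t | sliceVol n F t ≠ 0} ≤ volume F ∧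
    volume F ≤ M * volume {t | sliceVol n F t ≠ 0} := by
  have mS : MeasurableSet {t | sliceVol n F t ≠ 0} :=
    ((meas_slice n F hF) (measurableSet_singleton 0)).compl
  have e : volume F = ∫⁻ t in {t | sliceVol n F t ≠ 0}, sliceVol n F t := by
    rw [vol_slice n F hF, ← lintegral_indicator mS]
    refine lintegral_congr fun t => ?_
    by_cases ht : sliceVol n F t = 0 <;> simp [indicator, ht]
  rw [e]
  constructor
  · rw [← setLIntegral_const]
    refine setLIntegral_mono_ae (meas_slice n F hF).aemeasurable ?_
    filter_upwards [h] with t ht hts using (ht hts).1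
  · rw [← setLIntegral_const]
    refine setLIntegral_mono_ae measurable_const.aemeasurable ?_
    filter_upwards [h] with t ht hts using (ht hts).2

/-! ### Real arithmetic -/

lemma arith (θ θ0 c c1 c2 : ℝ) (h0 : 0 < θ) (h1 : θ < 1) (h2 : 0 ≤ θ0) (h3 : θ0 ≤ 1) :
    ∃ K : ℝ, 0 ≤ K ∧ ∀ M0 M1 lX le : ℝ, le ≤ 0 → lX ≤ M0 → lX ≤ M1 + c1 →
      le + (1 - θ) * M0 + θ * M1 - c ≤ lX →
      (1 - θ0) * M0 + θ0 * M1 + c2 ≤ K - K * le + (1 - θ) * M0 + θ * M1 := by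
  set B := |c| + |c1| + 1 with hB
  have hB1 : 1 ≤ B := by have := abs_nonneg c; have := abs_nonneg c1; linarith
  have h1' : 0 < 1 - θ := by linarith
  refine ⟨B * (1 / θ + 1 / (1 - θ)) + |c2|, by positivity, ?_⟩
  intro M0 M1 lX le hle hM0 hM1 hl
  have u1 : θ * (M1 - M0) ≤ B * (1 - le) := by
    have := le_abs_self c; have := abs_nonneg c1
    nlinarith
  have u2 : (1 - θ) * (M0 - M1) ≤ B * (1 - le) := by
    have := le_abs_self c; have := le_abs_self c1
    nlinarith
  have p1 : 0 ≤ B * (1 - le) := by apply mul_nonneg <;> linarith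
  have v1 : M1 - M0 ≤ B * (1 - le) * (1 / θ) := by
    rw [mul_one_div, le_div_iff₀ h0]; linarith
  have v2 : M0 - M1 ≤ B * (1 - le) * (1 / (1 - θ)) := by
    rw [mul_one_div, le_div_iff₀ h1']; linarith
  have w1 : 0 ≤ B * (1 - le) * (1 / θ) := by positivity
  have w2 : 0 ≤ B * (1 - le) * (1 / (1 - θ)) := by positivity
  have ha : |M1 - M0| ≤ B * (1 - le) * (1 / θ) + B * (1 - le) * (1 / (1 - θ)) := by
    rw [abs_le]; constructor <;> linarith
  have hb : (θ0 - θ) * (M1 - M0) ≤ |M1 - M0| := by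
    calc _ ≤ |(θ0 - θ) * (M1 - M0)| := le_abs_self _
      _ = |θ0 - θ| * |M1 - M0| := abs_mul _ _
      _ ≤ 1 * |M1 - M0| := by
        gcongr
        rw [abs_le]; constructor <;> linarith
      _ = _ := one_mul _
  have hc : c2 ≤ |c2| * (1 - le) := by
    have := le_abs_self c2; have := abs_nonneg c2; nlinarith
  nlinarith

lemma Nexp (k : ℕ) : ((ee k 3 + 1 + (k+2) : ℕ) : ℝ) = (k+2) * (k+3) / 2 := by
  have h := ee_closed k 2
  have h2 : 2 * ee k 3 = k * (k + 3) := by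
    rw [h]; congr 1; omega
  have h3 : (2:ℝ) * (ee k 3 : ℝ) = k * (k + 3) := by exact_mod_cast h2
  push_cast
  linarith

set_option maxHeartbeats 1000000 in
lemma final_real (k : ℕ) (θ C0 : ℝ) (h0 : 0 < θ) (h1 : θ < 1) (hC0 : 0 < C0) (D θ0 : ℝ)
    (hD : D = k + 3) (hθ0 : θ0 = (D^2 + D - 2) / (D^2 + D)) :
    ∃ C : ℝ, 1 ≤ C ∧ ∀ X e f τ A ε : ℝ, 0 < X → 0 < e → 0 < f → 0 < τ → 0 < A → 0 < ε → ε ≤ 1 →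
      X ≤ τ * e → f ≤ 2 * A * τ →
      (X / f) ^ (k+2) * (X / e) ^ (ee k 3 + 1 + (k+2)) ≤ C0 * A →
      ε * e ^ (1 - θ + θ * D / (D + 2)) *
        ((A/2) ^ (1 - (1 - θ + θ * (D^2 - D - 2) / (D^2 + D - 2))) * τ ^ (1 - θ * D / (D + 2))) ≤ X →
      e ^ (1 - θ0 + θ0 * D / (D + 2)) * f ^ (1 - θ0 * D / (D + 2)) ≤
        C * ε ^ (-C) * e ^ (1 - θ + θ * D / (D + 2)) *
        ((A/2) ^ (1 - (1 - θ + θ * (D^2 - D - 2) / (D^2 + D - 2))) * τ ^ (1 - θ * D / (D + 2))) := by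
  have hk : (0:ℝ) ≤ k := Nat.cast_nonneg k
  have hD3 : 3 ≤ D := by linarith
  have hn0 : D - 1 ≠ 0 := by linarith
  have hq : D^2 + D - 2 = (D - 1) * (D + 2) := by ring
  have hθ0' : 0 ≤ θ0 ∧ θ0 ≤ 1 := by
    rw [hθ0]
    constructor
    · apply div_nonneg <;> nlinarith
    · rw [div_le_one (by positivity)]; linarith
  -- rewritten exponents
  set x := D / (D + 2) with hx
  set w := 2 * D / ((D - 1) * (D + 2)) with hw
  have ex : ∀ ϑ : ℝ, ϑ * D / (D + 2) = ϑ * x := fun ϑ => by rw [hx]; ring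
  have er : 1 - (1 - θ + θ * (D^2 - D - 2) / (D^2 + D - 2)) = θ * w := by
    rw [hq, hw]
    have : D + 2 ≠ 0 := by linarith
    field_simp
    ring
  have e0 : 1 - θ0 * x = θ0 * w := by
    rw [hθ0, hx, hw, hq]
    have : D + 2 ≠ 0 := by linarith
    have : D^2 + D ≠ 0 := by positivity
    field_simp
    ring
  set c1 := (Real.log C0 + (D - 1) * Real.log 2) * (2 / ((D - 1) * (D + 2))) with hc1
  obtain ⟨K, hK, hmain⟩ := arith θ θ0 (θ * w * Real.log 2) c1
    (θ0 * w * Real.log 2 + θ * w * Real.log 2) h0 h1 hθ0'.1 hθ0'.2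
  refine ⟨Real.exp K, Real.one_le_exp hK, ?_⟩
  intro X e f τ A ε hX he hf hτ hA hε hε1 hX1 hf1 hcore hhyp
  simp only [ex, er] at hhyp ⊢
  have hA2 : 0 < A / 2 := by positivity
  have lA2 : Real.log (A / 2) = Real.log A - Real.log 2 := Real.log_div hA.ne' (by norm_num)
  have l1 : Real.log X ≤ Real.log τ + Real.log e := by
    rw [← Real.log_mul hτ.ne' he.ne']; exact Real.log_le_log hX hX1
  have l2 : Real.log f ≤ Real.log 2 + Real.log A + Real.log τ := by
    rw [← Real.log_mul (by norm_num) hA.ne', ← Real.log_mul (by positivity) hτ.ne']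
    exact Real.log_le_log hf hf1
  have l3 : (D - 1) * (Real.log X - Real.log f) + (D - 1) * D / 2 * (Real.log X - Real.log e) ≤
      Real.log C0 + Real.log A := by
    have := Real.log_le_log (by positivity) hcore
    rw [Real.log_mul (by positivity) (by positivity), Real.log_pow, Real.log_pow, Nexp,
      Real.log_div hX.ne' hf.ne', Real.log_div hX.ne' he.ne', Real.log_mul hC0.ne' hA.ne'] at this
    push_cast at this
    have e1 : (k:ℝ) + 2 = D - 1 := by linarith
    have e2 : (k:ℝ) + 3 = D := by linarith
    rw [e1, e2] at this
    exact this
  have l4 : Real.log ε + (1 - θ + θ * x) * Real.log e + (θ * w * (Real.log A - Real.log 2) +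
      (1 - θ * x) * Real.log τ) ≤ Real.log X := by
    have := Real.log_le_log (by positivity) hhyp
    rw [Real.log_mul (by positivity) (by positivity), Real.log_mul (by positivity) (by positivity),
      Real.log_mul (by positivity) (by positivity), Real.log_rpow he, Real.log_rpow hA2,
      Real.log_rpow hτ, lA2] at this
    exact this
  have lε : Real.log ε ≤ 0 := Real.log_nonpos hε.le hε1
  set LX := Real.log X
  set Le := Real.log e
  set Lf := Real.log f
  set Lt := Real.log τ
  set LA := Real.log A
  set Lε := Real.log ε
  have hx1 : 1 - x = 2 / (D + 2) := by rw [hx]; field_simp; ring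
  have l5 : LX ≤ (x * Le + (1 - x) * Lt + w * LA) + c1 := by
    have h5 : LX * ((D - 1) * (D + 2) / 2) ≤ Real.log C0 + (D - 1) * Real.log 2 + D * LA +
        (D - 1) * Lt + (D - 1) * D / 2 * Le := by
      have h7 := mul_le_mul_of_nonneg_left l2 (show 0 ≤ D - 1 by linarith)
      linarith
    have h6 : 0 < (D - 1) * (D + 2) / 2 := by
      have : 0 < D - 1 := by linarith
      positivity
    rw [← le_div_iff₀ h6] at h5
    refine h5.trans_eq ?_
    rw [hx1, hx, hw, hc1]
    have : D + 2 ≠ 0 := by linarith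
    field_simp
    ring
  have goal1 := hmain (Lt + Le) (x * Le + (1 - x) * Lt + w * LA) LX Lε lε l1 l5 (by linarith)
  have hC : K ≤ Real.exp K := by have := Real.add_one_le_exp K; linarith
  have hCe : K - K * Lε ≤ K - Real.exp K * Lε := by
    have := mul_le_mul_of_nonpos_right hC lε
    linarith
  have hw0 : 0 ≤ θ0 * w := by
    apply mul_nonneg hθ0'.1
    rw [hw]
    have : 0 < D - 1 := by linarith
    positivity
  have l6 : (1 - θ0 * x) * Lf ≤ (1 - θ0 * x) * (Real.log 2 + LA + Lt) := by
    rw [e0]; exact mul_le_mul_of_nonneg_left l2 hw0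
  have e0' : θ0 * w * LA = (1 - θ0 * x) * LA := by rw [e0]
  have e0'' : θ0 * w * Real.log 2 = (1 - θ0 * x) * Real.log 2 := by rw [e0]
  have hCpos := Real.exp_pos K
  rw [← Real.log_le_log_iff (by positivity) (by positivity)]
  rw [Real.log_mul (by positivity) (by positivity), Real.log_mul (by positivity) (by positivity),
    Real.log_mul (by positivity) (by positivity), Real.log_mul (by positivity) (by positivity),
    Real.log_mul (by positivity) (by positivity), Real.log_rpow he, Real.log_rpow he,
    Real.log_rpow hf, Real.log_rpow hA2, Real.log_rpow hτ, Real.log_rpow hε, lA2, Real.log_exp]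
  linarith

/-- lower bound relating quasiextremal pairs at `θ` to the exponent `θ₀`. -/
theorem quasiextremal_theta0_bound (d : ℕ) (hd : 3 ≤ d) (θ : ℝ)
    (hθ : θ ∈ Set.Ioo (0:ℝ) 1) :
    ∃ C : ℝ, 1 ≤ C ∧
      ∀ E F : Set (Pt (d-1)), MeasurableSet E → MeasurableSet F →
        0 < volume E → volume E < ⊤ → 0 < volume F → volume F < ⊤ →
        ∀ (A : ℝ) (T : Set ℝ), 0 < A →
          (∀ᵐ t : ℝ, t ∈ T → ENNReal.ofReal (A/2) ≤ sliceVol (d-1) F t ∧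
              sliceVol (d-1) F t ≤ ENNReal.ofReal (2*A)) →
          (∀ᵐ t : ℝ, t ∉ T → sliceVol (d-1) F t = 0) →
        ∀ ε : ℝ, ε ∈ Set.Ioc (0:ℝ) 1 →
          ENNReal.ofReal ε * volume E ^ (1 / pExp d θ) * dualNorm d θ (ind (d-1) F) ≤
            pairSet (d-1) E F →
          volume E ^ (1 / pExp d (theta0 d)) *
              volume F ^ (1 / dualExp (qExp d (theta0 d))) ≤
            ENNReal.ofReal (C * ε ^ (-C)) * volume E ^ (1 / pExp d θ) *
              dualNorm d θ (ind (d-1) F) := by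
  obtain ⟨k, rfl⟩ : ∃ k, d = k + 3 := ⟨d - 3, by omega⟩
  obtain ⟨h0, h1⟩ := hθ
  obtain ⟨C0, hC0, hcore⟩ := core k
  set D : ℝ := ((k + 3 : ℕ) : ℝ) with hDdef
  have hD : D = k + 3 := by rw [hDdef]; push_cast; ring
  have hk : (0:ℝ) ≤ k := Nat.cast_nonneg k
  have hD3 : 3 ≤ D := by linarith
  obtain ⟨C, hC1, hC⟩ := final_real k θ C0 h0 h1 hC0 D (theta0 (k+3)) hD rfl
  refine ⟨C, hC1, ?_⟩
  intro E F hE hF hE0 hET hF0 hFT A T hA hT hTc ε hε hhyp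
  change Set (Pt (k+2)) at E
  change Set (Pt (k+2)) at F
  change volume E ^ _ * volume F ^ _ ≤ _
  -- exponents
  have ip : ∀ ϑ, 1 / pExp (k+3) ϑ = 1 - ϑ + ϑ * D / (D + 2) := fun ϑ => by
    simp [pExp, hDdef]
  have hdual : ∀ x : ℝ, x ≠ 0 → 1 / dualExp x⁻¹ = 1 - x := fun x hx => by
    unfold dualExp
    rw [one_div, inv_div, sub_div, div_self (inv_ne_zero hx), one_div, inv_inv]
  have hdpos : ∀ x : ℝ, 0 < x → x < 1 → 0 < dualExp x⁻¹ := fun x hx hx1 => by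
    have h2 := hdual x hx.ne'
    have h3 : 0 < 1 / dualExp x⁻¹ := by rw [h2]; linarith
    exact one_div_pos.1 h3
  have iq : ∀ ϑ, 0 < ϑ → 1 / dualExp (qExp (k+3) ϑ) = 1 - ϑ * D / (D + 2) := fun ϑ hϑ => by
    exact hdual _ (by positivity)
  have hqpos : 0 < dualExp (qExp (k+3) θ) := by
    refine hdpos _ (by positivity) ?_
    rw [div_lt_one (by positivity)]
    nlinarith
  have hy0 : 0 < D^2 + D - 2 := by nlinarith
  have hy1 : 0 ≤ (D^2 - D - 2) / (D^2 + D - 2) := by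
    apply div_nonneg <;> nlinarith
  have hy2 : (D^2 - D - 2) / (D^2 + D - 2) < 1 := by
    rw [div_lt_one hy0]; linarith
  have hyy : θ * (D^2 - D - 2) / (D^2 + D - 2) = θ * ((D^2 - D - 2) / (D^2 + D - 2)) := by ring
  have hr0 : 0 < 1 - θ + θ * (D^2 - D - 2) / (D^2 + D - 2) := by
    rw [hyy]; have := mul_nonneg h0.le hy1; linarith
  have hr1 : 1 - θ + θ * (D^2 - D - 2) / (D^2 + D - 2) < 1 := by
    rw [hyy]; nlinarith
  have ir : 1 / dualExp (rExp (k+3) θ) = 1 - (1 - θ + θ * (D^2 - D - 2) / (D^2 + D - 2)) :=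
    hdual _ hr0.ne'
  have hrpos : 0 < dualExp (rExp (k+3) θ) := hdpos _ hr0 hr1
  have ht0 : 0 < theta0 (k+3) := by
    unfold theta0
    exact div_pos hy0 (by positivity)
  -- slices
  have hsl : ∀ᵐ t : ℝ, sliceVol (k+2) F t ≠ 0 → ENNReal.ofReal (A/2) ≤ sliceVol (k+2) F t ∧
      sliceVol (k+2) F t ≤ ENNReal.ofReal (2*A) := by
    filter_upwards [hT, hTc] with t h2 h3 h4
    by_cases h5 : t ∈ T
    · exact h2 h5
    · exact absurd (h3 h5) h4
  have hsl2 : ∀ᵐ t : ℝ, sliceVol (k+2) F t ≤ ENNReal.ofReal (2*A) := by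
    filter_upwards [hsl] with t h2
    by_cases h5 : sliceVol (k+2) F t = 0
    · rw [h5]; exact zero_le
    · exact (h2 h5).2
  set G := goodF (k+2) F (ENNReal.ofReal (2*A)) with hG
  have mG : MeasurableSet G := meas_goodF _ F hF _
  have hGF : G =ᵐ[volume] F := goodF_ae _ F hF _ hsl2
  obtain ⟨vb1, vb2⟩ := vol_bounds (k+2) F hF _ _ hsl
  have hlow := norm_lower (k+2) F hF _ _ hqpos hrpos (ENNReal.ofReal (A/2))
    (hsl.mono fun t ht h => (ht h).1)
  have hXle := inc_le_tau (k+2) E F hE hF (ENNReal.ofReal (2*A))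
  set W := volume {t | sliceVol (k+2) F t ≠ 0} with hW
  have hWT : W ≠ ⊤ := by
    intro h
    rw [h, ENNReal.mul_top (by simp [hA])] at vb1
    exact absurd hFT (not_lt.2 vb1)
  have hW0 : W ≠ 0 := by
    intro h
    rw [h, mul_zero] at vb2
    exact absurd hF0 (not_lt.2 vb2)
  have hpair : pairSet (k+2) E F = inc (k+2) E G := by
    rw [pair_eq _ E F hE hF]
    unfold inc
    exact (setLIntegral_congr hGF).symm
  set Dn := dualNorm (k+3) θ (ind (k+2) F) with hDn
  have hlow' : ENNReal.ofReal (A/2) ^ (1 / dualExp (rExp (k+3) θ)) *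
      W ^ (1 / dualExp (qExp (k+3) θ)) ≤ Dn := hlow
  have hhyp' : ENNReal.ofReal ε * volume E ^ (1 / pExp (k+3) θ) * Dn ≤ inc (k+2) E G := by
    rw [← hpair]; exact hhyp
  -- pass to real numbers
  have hXT : inc (k+2) E G ≠ ⊤ :=
    ne_top_of_le_ne_top (ENNReal.mul_ne_top hWT hET.ne) hXle
  set e := (volume E).toReal with he
  set f := (volume F).toReal with hf
  set τ := W.toReal with hτ
  set X := (inc (k+2) E G).toReal with hX
  have ee1 : volume E = ENNReal.ofReal e := (ENNReal.ofReal_toReal hET.ne).symm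
  have ff1 : volume F = ENNReal.ofReal f := (ENNReal.ofReal_toReal hFT.ne).symm
  have tt1 : W = ENNReal.ofReal τ := (ENNReal.ofReal_toReal hWT).symm
  have xx1 : inc (k+2) E G = ENNReal.ofReal X := (ENNReal.ofReal_toReal hXT).symm
  have e0 : 0 < e := ENNReal.toReal_pos hE0.ne' hET.ne
  have f0 : 0 < f := ENNReal.toReal_pos hF0.ne' hFT.ne
  have t0 : 0 < τ := ENNReal.toReal_pos hW0 hWT
  have A2 : 0 < A / 2 := by positivity
  rw [ip] at hhyp' ⊢
  rw [ip, iq _ ht0, ee1, ff1]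
  rw [ee1] at hhyp'
  rw [iq _ h0, ir, tt1, ENNReal.ofReal_rpow_of_pos A2, ENNReal.ofReal_rpow_of_pos t0,
    ← ENNReal.ofReal_mul (by positivity)] at hlow'
  rw [ENNReal.ofReal_rpow_of_pos e0] at hhyp' ⊢
  rw [ENNReal.ofReal_rpow_of_pos e0, ENNReal.ofReal_rpow_of_pos f0,
    ← ENNReal.ofReal_mul (by positivity)]
  have hh2 : ε * e ^ (1 - θ + θ * D / (D + 2)) *
        ((A/2) ^ (1 - (1 - θ + θ * (D^2 - D - 2) / (D^2 + D - 2))) * τ ^ (1 - θ * D / (D + 2))) ≤ X := by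
    have h2 := (mul_le_mul_right hlow' _).trans hhyp'
    rw [xx1, ← ENNReal.ofReal_mul hε.1.le, ← ENNReal.ofReal_mul (by have := hε.1; positivity)] at h2
    exact (ENNReal.ofReal_le_ofReal_iff ENNReal.toReal_nonneg).1 h2
  have X0 : 0 < X := by
    refine lt_of_lt_of_le ?_ hh2
    have := hε.1
    positivity
  have hX1 : X ≤ τ * e := by
    rw [xx1, tt1, ee1, ← ENNReal.ofReal_mul t0.le] at hXle
    exact (ENNReal.ofReal_le_ofReal_iff (by positivity)).1 hXle
  have hf1 : f ≤ 2 * A * τ := by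
    rw [ff1, tt1, ← ENNReal.ofReal_mul (by positivity)] at vb2
    exact (ENNReal.ofReal_le_ofReal_iff (by positivity)).1 vb2
  have hco := hcore E G hE mG X e f A X0 e0 f0 hA xx1 ee1 (by rw [← ff1]; exact measure_congr hGF)
    (goodF_slice _ F _)
  have hfin := hC X e f τ A ε X0 e0 f0 t0 hA hε.1 hε.2 hX1 hf1 hco hh2
  refine (ENNReal.ofReal_le_ofReal hfin).trans ?_
  have hε0 := hε.1
  rw [ENNReal.ofReal_mul (by positivity), ENNReal.ofReal_mul (by positivity)]
  exact mul_le_mul_right hlow' _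

end
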